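/- arXiv:2501.19126 — 3 statements merged into one kernel-verified Lean document; each statement's English description precedes it below -/
import Mathlib

section
/- (Dual representation of KL_inf for bounded distributions.) For every probability distribution ν supported on [0,1] and every x ∈ (0,1): KL_inf^U(ν,B,x) = sup_{λ ∈ [0, 1/(1−x)]} E_{X∼ν}[ log(1 − λ(X − x)) ], and KL_inf^L(ν,B,x) = sup_{λ ∈ [0, 1/x]} E_{X∼ν}[ log(1 + λ(X − x)) ], with the convention log(z) = −∞ for z ≤ 0. -/
open MeasureTheory ProbabilityTheory Filter Set
open scoped ENNReal

noncomputable section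
open scoped Classical

/-- `B`: the family of probability distributions supported on `[0,1]`. -/
def Bset : Set (Measure ℝ) := {κ | IsProbabilityMeasure κ ∧ κ (Set.Icc (0:ℝ) 1)ᶜ = 0}

/-- The mean `m(κ)` of a distribution `κ`. -/
def mmean (κ : Measure ℝ) : ℝ := ∫ x, x ∂κ

/-- KL divergence, valued in `[0,∞]`: `∫ log(dμ/dν) dμ` when `μ ≪ ν` and this integral is
finite, and `∞` otherwise. -/
def KLdiv (μ ν : Measure ℝ) : ℝ≥0∞ :=
  if μ ≪ ν ∧ Integrable (llr μ ν) μ then ENNReal.ofReal (∫ x, llr μ ν x ∂μ) else ⊤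

/-- `KL_inf^U(ν,B,x) = inf{ KL(ν,κ) : κ ∈ B, m(κ) ≥ x }`. -/
def KLinfU (ν : Measure ℝ) (x : ℝ) : ℝ≥0∞ :=
  ⨅ κ ∈ {κ ∈ Bset | x ≤ mmean κ}, KLdiv ν κ

/-- `KL_inf^L(ν,B,x) = inf{ KL(ν,κ) : κ ∈ B, m(κ) ≤ x }`. -/
def KLinfL (ν : Measure ℝ) (x : ℝ) : ℝ≥0∞ :=
  ⨅ κ ∈ {κ ∈ Bset | mmean κ ≤ x}, KLdiv ν κ

/-- `KL_inf(ν,B,x)`: equals `KL_inf^U` for `x ≥ m(ν)` and `KL_inf^L` for `x < m(ν)`. -/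
def KLinf (ν : Measure ℝ) (x : ℝ) : ℝ≥0∞ :=
  if mmean ν ≤ x then KLinfU ν x else KLinfL ν x

/-- Extended logarithm: `log z` for `z > 0`, and `−∞` for `z ≤ 0`. -/
def elog (z : ℝ) : EReal := if z ≤ 0 then ⊥ else ((Real.log z : ℝ) : EReal)

/-- Positive part of an extended real, as an element of `[0,∞]`. -/
def erealPos (x : EReal) : ℝ≥0∞ := if x = ⊤ then ⊤ else ENNReal.ofReal x.toReal

/-- The (extended-real valued) integral of an `EReal`-valued function: the difference of the
lower integrals of its positive and negative parts. -/
def integralEReal (ν : Measure ℝ) (f : ℝ → EReal) : EReal :=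
  ((∫⁻ y, erealPos (f y) ∂ν : ℝ≥0∞) : EReal) - ((∫⁻ y, erealPos (-(f y)) ∂ν : ℝ≥0∞) : EReal)

lemma intER_real (ν : Measure ℝ) (g : ℝ → ℝ) (hg : ∀ᵐ y ∂ν, 0 < g y)
    (hi : Integrable (fun y => Real.log (g y)) ν) :
    integralEReal ν (fun y => elog (g y)) = ((∫ y, Real.log (g y) ∂ν : ℝ) : EReal) := by
  have h1 : ∫⁻ y, erealPos (elog (g y)) ∂ν = ∫⁻ y, ENNReal.ofReal (Real.log (g y)) ∂ν := by
    apply lintegral_congr_ae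
    filter_upwards [hg] with y hy
    simp [erealPos, elog, not_le.mpr hy]
  have h2 : ∫⁻ y, erealPos (-(elog (g y))) ∂ν = ∫⁻ y, ENNReal.ofReal (-Real.log (g y)) ∂ν := by
    apply lintegral_congr_ae
    filter_upwards [hg] with y hy
    simp [erealPos, elog, not_le.mpr hy]
  have f1 : ∫⁻ y, ENNReal.ofReal (Real.log (g y)) ∂ν ≠ ⊤ := hi.lintegral_lt_top.ne
  have f2 : ∫⁻ y, ENNReal.ofReal (-Real.log (g y)) ∂ν ≠ ⊤ := hi.neg.lintegral_lt_top.ne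
  rw [integralEReal, h1, h2, integral_eq_lintegral_pos_part_sub_lintegral_neg_part hi,
    EReal.coe_sub, ← EReal.toReal_coe_ennreal, ← EReal.toReal_coe_ennreal,
    EReal.coe_toReal (by simpa using f1) (by simp), EReal.coe_toReal (by simpa using f2) (by simp)]

lemma intER_cases (ν : Measure ℝ) [IsFiniteMeasure ν] (g : ℝ → ℝ) (hm : Measurable g) (C : ℝ)
    (hC : ∀ᵐ y ∂ν, g y ≤ C) :
    integralEReal ν (fun y => elog (g y)) = ⊥ ∨
      ((∀ᵐ y ∂ν, 0 < g y) ∧ Integrable (fun y => Real.log (g y)) ν) := by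
  by_cases h : ∫⁻ y, erealPos (-(elog (g y))) ∂ν = ⊤
  · left
    rw [integralEReal, h]
    simp
  right
  have hme : Measurable (fun y => erealPos (-(elog (g y)))) := by
    have : (fun y => erealPos (-(elog (g y)))) =
        fun y => if g y ≤ 0 then ⊤ else ENNReal.ofReal (-Real.log (g y)) := by
      funext y
      by_cases hy : g y ≤ 0 <;> simp [erealPos, elog, hy]
    rw [this]
    exact Measurable.ite (measurableSet_le hm measurable_const) measurable_const
      (ENNReal.measurable_ofReal.comp (Real.measurable_log.comp hm).neg)
  have hpos : ∀ᵐ y ∂ν, 0 < g y := by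
    filter_upwards [ae_lt_top hme h] with y hy
    by_contra hy'
    simp [erealPos, elog, not_lt.mp hy'] at hy
  refine ⟨hpos, ?_⟩
  have h2 : ∫⁻ y, erealPos (-(elog (g y))) ∂ν = ∫⁻ y, ENNReal.ofReal (-Real.log (g y)) ∂ν := by
    apply lintegral_congr_ae
    filter_upwards [hpos] with y hy
    simp [erealPos, elog, not_le.mpr hy]
  rw [h2] at h
  have hI := integrable_toReal_of_lintegral_ne_top
    (ENNReal.measurable_ofReal.comp (Real.measurable_log.comp hm).neg).aemeasurable h
  refine (hI.add (integrable_const |C|)).mono' (Real.measurable_log.comp hm).aestronglyMeasurable ?_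
  filter_upwards [hpos, hC] with y hy hyC
  have e1 := Real.log_le_sub_one_of_pos hy
  have e2 := le_abs_self C
  have e3 := abs_nonneg C
  simp only [Pi.add_apply, Function.comp, Pi.neg_apply, Real.norm_eq_abs, ENNReal.toReal_ofReal']
  rw [abs_le]
  constructor
  · linarith [le_max_left (-Real.log (g y)) 0]
  · linarith [le_max_right (-Real.log (g y)) 0]

lemma bset_ae {κ : Measure ℝ} (h : κ ∈ Bset) : ∀ᵐ y ∂κ, y ∈ Set.Icc (0:ℝ) 1 := h.2

lemma bset_int {κ : Measure ℝ} (h : κ ∈ Bset) : Integrable (fun y : ℝ => y) κ := by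
  have := h.1
  refine (integrable_const (1:ℝ)).mono' measurable_id.aestronglyMeasurable ?_
  filter_upwards [bset_ae h] with y hy
  rw [Real.norm_eq_abs, abs_le]
  constructor <;> linarith [hy.1, hy.2]

lemma bset_int_aff {κ : Measure ℝ} (h : κ ∈ Bset) (l c x : ℝ) :
    Integrable (fun y : ℝ => 1 + l * (c * (y - x))) κ := by
  have := h.1
  exact (integrable_const 1).add
    ((((bset_int h).sub (integrable_const x)).const_mul c).const_mul l)

lemma bset_mean_aff {κ : Measure ℝ} (h : κ ∈ Bset) (l c x : ℝ) :
    ∫ y, (1 + l * (c * (y - x))) ∂κ = 1 + l * (c * (mmean κ - x)) := by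
  have := h.1
  have i1 : Integrable (fun y : ℝ => y - x) κ := (bset_int h).sub (integrable_const x)
  rw [integral_add (integrable_const 1) ((i1.const_mul c).const_mul l), integral_const_mul,
    integral_const_mul, integral_sub (bset_int h) (integrable_const x)]
  simp [mmean]

lemma weak_dual {ν κ : Measure ℝ} (hν : ν ∈ Bset) (hκ : κ ∈ Bset) (l c x : ℝ)
    (hl : 0 ≤ l) (hg : ∀ y ∈ Set.Icc (0:ℝ) 1, 0 ≤ 1 + l * (c * (y - x)))
    (hm : c * (mmean κ - x) ≤ 0) :
    integralEReal ν (fun y => elog (1 + l * (c * (y - x)))) ≤ (KLdiv ν κ : EReal) := by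
  have := hν.1
  have := hκ.1
  have hmeas : Measurable (fun y : ℝ => 1 + l * (c * (y - x))) := by fun_prop
  rcases intER_cases ν (fun y => 1 + l * (c * (y - x))) hmeas (1 + l * (|c| * (1 + |x|))) (by
    filter_upwards [bset_ae hν] with y hy
    have : c * (y - x) ≤ |c| * (1 + |x|) := by
      refine (le_abs_self _).trans ?_
      rw [abs_mul]
      gcongr
      rw [abs_le]
      constructor <;> linarith [hy.1, hy.2, le_abs_self x, neg_abs_le x]
    gcongr) with h | ⟨hpos, hint⟩
  · rw [h]; exact bot_le
  rw [intER_real ν _ hpos hint]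
  unfold KLdiv
  split_ifs with hk
  swap
  · simp
  obtain ⟨hac, hllr⟩ := hk
  have key : ∫ y, Real.log (1 + l * (c * (y - x))) ∂ν ≤ ∫ y, llr ν κ y ∂ν := by
    set g : ℝ → ℝ := fun y => 1 + l * (c * (y - x)) with hgdef
    -- the function `g * (dν/dκ)⁻¹`
    set r : ℝ → ℝ≥0∞ := ν.rnDeriv κ with hr
    have hrm : Measurable r := Measure.measurable_rnDeriv _ _
    have hrpos : ∀ᵐ y ∂ν, 0 < r y := Measure.rnDeriv_pos hac
    have hrfin : ∀ᵐ y ∂ν, r y < ⊤ := hac.ae_le (Measure.rnDeriv_lt_top ν κ)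
    have hle : ∫⁻ y, ENNReal.ofReal (g y) * (r y)⁻¹ ∂ν ≤ 1 := by
      calc ∫⁻ y, ENNReal.ofReal (g y) * (r y)⁻¹ ∂ν
          = ∫⁻ y, r y * (ENNReal.ofReal (g y) * (r y)⁻¹) ∂κ := by
            rw [lintegral_rnDeriv_mul hac (by fun_prop)]
        _ ≤ ∫⁻ y, ENNReal.ofReal (g y) ∂κ := by
            apply lintegral_mono
            intro y
            dsimp only
            rw [mul_left_comm]
            exact mul_le_of_le_one_right' (ENNReal.mul_inv_le_one _)
        _ = ENNReal.ofReal (∫ y, g y ∂κ) := by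
            rw [ofReal_integral_eq_lintegral_ofReal (bset_int_aff hκ l c x)]
            filter_upwards [bset_ae hκ] with y hy using hg y hy
        _ ≤ 1 := by
            rw [hgdef, bset_mean_aff hκ, ENNReal.ofReal_le_one]
            nlinarith
    have hmm : Measurable (fun y => ENNReal.ofReal (g y) * (r y)⁻¹) := by fun_prop
    have hI := integrable_toReal_of_lintegral_ne_top hmm.aemeasurable
      (hle.trans_lt ENNReal.one_lt_top).ne
    have hI1 : ∫ y, (ENNReal.ofReal (g y) * (r y)⁻¹).toReal ∂ν ≤ 1 := by
      rw [integral_toReal hmm.aemeasurable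
        (ae_lt_top hmm (hle.trans_lt ENNReal.one_lt_top).ne)]
      exact ENNReal.toReal_le_of_le_ofReal zero_le_one (by simpa using hle)
    have h3 : ∫ y, (Real.log (g y) - llr ν κ y) ∂ν ≤
        ∫ y, ((ENNReal.ofReal (g y) * (r y)⁻¹).toReal - 1) ∂ν := by
      apply integral_mono_ae (hint.sub hllr) (hI.sub (integrable_const 1))
      filter_upwards [hpos, hrpos, hrfin] with y h1 h2 h3
      have hr0 : 0 < (r y).toReal := ENNReal.toReal_pos h2.ne' h3.ne
      have h1' : 0 < g y := h1
      change Real.log (g y) - Real.log (r y).toReal ≤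
        (ENNReal.ofReal (g y) * (r y)⁻¹).toReal - 1
      rw [← Real.log_div h1'.ne' hr0.ne', ENNReal.toReal_mul,
        ENNReal.toReal_ofReal h1'.le, ENNReal.toReal_inv, ← div_eq_mul_inv]
      exact Real.log_le_sub_one_of_pos (div_pos h1' hr0)
    rw [integral_sub hint hllr, integral_sub hI (integrable_const 1)] at h3
    simp only [integral_const, probReal_univ, smul_eq_mul, mul_one] at h3
    linarith
  calc ((∫ y, Real.log (1 + l * (c * (y - x))) ∂ν : ℝ) : EReal)
      ≤ ((∫ y, llr ν κ y ∂ν : ℝ) : EReal) := by exact_mod_cast key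
    _ ≤ _ := by
      rw [EReal.coe_ennreal_ofReal]
      exact_mod_cast le_max_left _ _

lemma primal {ν : Measure ℝ} (hν : ν ∈ Bset) (l c x e : ℝ) (he : e ∈ Set.Icc (0:ℝ) 1)
    (hl : 0 < l) (hg : ∀ y ∈ Set.Icc (0:ℝ) 1, 0 ≤ 1 + l * (c * (y - x)))
    (hmass : ∫⁻ y, (ENNReal.ofReal (1 + l * (c * (y - x))))⁻¹ ∂ν ≤ 1)
    (hz : (1 - ∫⁻ y, (ENNReal.ofReal (1 + l * (c * (y - x))))⁻¹ ∂ν) *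
      ENNReal.ofReal (1 + l * (c * (e - x))) = 0) :
    ∃ κ ∈ Bset, c * (mmean κ - x) ≤ 0 ∧ (KLdiv ν κ : EReal) ≤
      max (integralEReal ν (fun y => elog (1 + l * (c * (y - x))))) 0 := by
  have := hν.1
  set g : ℝ → ℝ := fun y => 1 + l * (c * (y - x)) with hgdef
  have hgm : Measurable g := by fun_prop
  set D : ℝ → ℝ≥0∞ := fun y => (ENNReal.ofReal (g y))⁻¹ with hD
  have hDm : Measurable D := by fun_prop
  have hfin : ∫⁻ y, D y ∂ν ≠ ⊤ := (hmass.trans_lt ENNReal.one_lt_top).ne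
  have hpos : ∀ᵐ y ∂ν, 0 < g y := by
    filter_upwards [ae_lt_top hDm hfin] with y hy
    simpa [hD] using hy
  set κ : Measure ℝ := ν.withDensity D + (1 - ∫⁻ y, D y ∂ν) • Measure.dirac e with hκdef
  have hκB : κ ∈ Bset := by
    refine ⟨⟨?_⟩, ?_⟩
    · simp only [hκdef, Measure.coe_add, Measure.coe_smul, Pi.add_apply, Pi.smul_apply,
        withDensity_apply _ MeasurableSet.univ, Measure.restrict_univ, measure_univ, smul_eq_mul,
        mul_one]
      exact add_tsub_cancel_of_le hmass
    · have h1 : ν.withDensity D (Set.Icc (0:ℝ) 1)ᶜ = 0 :=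
        withDensity_absolutelyContinuous ν D hν.2
      simp only [hκdef, Measure.coe_add, Measure.coe_smul, Pi.add_apply, Pi.smul_apply, h1]
      rw [Measure.dirac_apply' _ measurableSet_Icc.compl]
      simp [he.1, he.2]
  have := hκB.1
  have hrec : κ.withDensity (fun y => ENNReal.ofReal (g y)) = ν := by
    rw [hκdef, withDensity_add_measure, withDensity_smul_measure, 
      ← withDensity_mul ν hDm (by fun_prop : Measurable fun y => ENNReal.ofReal (g y))]
    have h1 : ν.withDensity (D * fun y => ENNReal.ofReal (g y)) = ν := by
      conv_rhs => rw [← withDensity_one (μ := ν)]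
      apply withDensity_congr_ae
      filter_upwards [hpos] with y hy
      simp only [Pi.mul_apply, hD, Pi.one_apply]
      exact ENNReal.inv_mul_cancel (by simpa using hy) ENNReal.ofReal_ne_top
    have h2 : (Measure.dirac e).withDensity (fun y => ENNReal.ofReal (g y)) =
        ENNReal.ofReal (g e) • Measure.dirac e := by
      ext s hs
      rw [withDensity_apply _ hs, Measure.smul_apply, Measure.dirac_apply' _ hs,
        ← lintegral_indicator hs, lintegral_dirac' _ ((by fun_prop : Measurable fun y => ENNReal.ofReal (g y)).indicator hs)]
      by_cases hes : e ∈ s <;> simp [hes]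
    rw [h1, h2, smul_smul, hz, zero_smul, add_zero]
  have hac : ν ≪ κ := by
    conv_lhs => rw [← hrec]
    exact withDensity_absolutelyContinuous _ _
  have hrn : ν.rnDeriv κ =ᵐ[ν] fun y => ENNReal.ofReal (g y) := by
    have h := Measure.rnDeriv_withDensity κ
      (by fun_prop : Measurable fun y => ENNReal.ofReal (g y))
    rw [hrec] at h
    exact hac.ae_le h
  have hllr : llr ν κ =ᵐ[ν] fun y => Real.log (g y) := by
    filter_upwards [hrn, hpos] with y h1 h2
    rw [llr, h1, ENNReal.toReal_ofReal h2.le]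
  have hint : Integrable (fun y => Real.log (g y)) ν := by
    have hI := integrable_toReal_of_lintegral_ne_top hDm.aemeasurable hfin
    refine (hI.add (bset_int_aff hν l c x)).mono'
      (Real.measurable_log.comp hgm).aestronglyMeasurable ?_
    filter_upwards [hpos] with y hy
    have e1 := Real.log_le_sub_one_of_pos hy
    have e2 := Real.log_le_sub_one_of_pos (inv_pos.mpr hy)
    rw [Real.log_inv] at e2
    have e3 : (D y).toReal = (g y)⁻¹ := by
      rw [hD, ENNReal.toReal_inv, ENNReal.toReal_ofReal hy.le]
    have e4 := inv_pos.mpr hy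
    simp only [Pi.add_apply, Real.norm_eq_abs, e3]
    change |Real.log (g y)| ≤ (g y)⁻¹ + g y
    rw [abs_le]
    constructor <;> linarith
  refine ⟨κ, hκB, ?_, ?_⟩
  · have h1 : ∫⁻ y, ENNReal.ofReal (g y) ∂κ = 1 := by
      have : κ.withDensity (fun y => ENNReal.ofReal (g y)) univ = 1 := by
        rw [hrec]; exact measure_univ
      rwa [withDensity_apply _ MeasurableSet.univ, Measure.restrict_univ] at this
    have h2 : ∫ y, g y ∂κ = 1 := by
      rw [integral_eq_lintegral_of_nonneg_ae _ hgm.aestronglyMeasurable, h1]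
      · simp
      · filter_upwards [bset_ae hκB] with y hy using hg y hy
    rw [hgdef, bset_mean_aff hκB] at h2
    have h3 : l * (c * (mmean κ - x)) = 0 := by linarith
    rcases mul_eq_zero.mp h3 with h | h
    · exact absurd h hl.ne'
    · exact h.le
  · have hk : ν ≪ κ ∧ Integrable (llr ν κ) ν := ⟨hac, hint.congr hllr.symm⟩
    rw [intER_real ν g hpos hint, KLdiv, if_pos hk, integral_congr_ae hllr,
      EReal.coe_ennreal_ofReal]
    exact (EReal.coe_strictMono.monotone.map_max).le

lemma aff_pos {d l t : ℝ} (hl0 : 0 ≤ l) (h : -d ≤ t) : 1 - l * d ≤ 1 + l * t := by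
  nlinarith

lemma exists_dual {ν : Measure ℝ} (hν : ν ∈ Bset) (c x e d : ℝ) (he : e ∈ Set.Icc (0:ℝ) 1)
    (hd : 0 < d) (hce : c * (e - x) = -d) (hcd : ∀ y ∈ Set.Icc (0:ℝ) 1, -d ≤ c * (y - x))
    (hm : 0 < c * (mmean ν - x)) :
    ∃ l ∈ Set.Ioc (0:ℝ) (1 / d),
      ∫⁻ y, (ENNReal.ofReal (1 + l * (c * (y - x))))⁻¹ ∂ν ≤ 1 ∧
      (1 - ∫⁻ y, (ENNReal.ofReal (1 + l * (c * (y - x))))⁻¹ ∂ν) *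
        ENNReal.ofReal (1 + l * (c * (e - x))) = 0 := by
  have := hν.1
  set M : ℝ := |c| * (1 + |x|) with hM
  have hbd : ∀ y ∈ Set.Icc (0:ℝ) 1, |c * (y - x)| ≤ M := by
    intro y hy
    rw [abs_mul]
    refine mul_le_mul_of_nonneg_left ?_ (abs_nonneg c)
    rw [abs_le]
    constructor <;> linarith [hy.1, hy.2, le_abs_self x, neg_abs_le x]
  have hlt : ∀ l, l < 1 / d → 0 < 1 - l * d := by
    intro l h
    rw [lt_div_iff₀ hd] at h
    linarith
  set H : ℝ → ℝ := fun l => ∫ y, c * (y - x) / (1 + l * (c * (y - x))) ∂ν with hH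
  -- mass formula
  have hinvint : ∀ l, 0 ≤ l → l < 1 / d →
      Integrable (fun y => (1 + l * (c * (y - x)))⁻¹) ν := by
    intro l h0 h1
    refine (integrable_const (1 - l * d)⁻¹).mono'
      (by fun_prop : Measurable _).aestronglyMeasurable ?_
    filter_upwards [bset_ae hν] with y hy
    have e1 := aff_pos h0 (hcd y hy)
    have e2 := hlt l h1
    rw [Real.norm_eq_abs, abs_of_pos (inv_pos.mpr (e2.trans_le e1))]
    exact inv_anti₀ e2 e1
  have hquot : ∀ l, 0 ≤ l → l < 1 / d →
      Integrable (fun y => c * (y - x) / (1 + l * (c * (y - x)))) ν := by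
    intro l h0 h1
    refine (integrable_const (M * (1 - l * d)⁻¹)).mono'
      (by fun_prop : Measurable _).aestronglyMeasurable ?_
    filter_upwards [bset_ae hν] with y hy
    have e1 := aff_pos h0 (hcd y hy)
    have e2 := hlt l h1
    rw [Real.norm_eq_abs, div_eq_mul_inv, abs_mul, abs_of_pos (inv_pos.mpr (e2.trans_le e1))]
    exact mul_le_mul (hbd y hy) (inv_anti₀ e2 e1) (inv_pos.mpr (e2.trans_le e1)).le
      ((abs_nonneg _).trans (hbd y hy))
  have hmass : ∀ l, 0 ≤ l → l < 1 / d →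
      ∫⁻ y, (ENNReal.ofReal (1 + l * (c * (y - x))))⁻¹ ∂ν = ENNReal.ofReal (1 - l * H l) := by
    intro l h0 h1
    have e3 : 1 - l * H l = ∫ y, (1 + l * (c * (y - x)))⁻¹ ∂ν := by
      have : ∫ y, (1 + l * (c * (y - x)))⁻¹ ∂ν =
          ∫ y, (1 - l * (c * (y - x) / (1 + l * (c * (y - x))))) ∂ν := by
        apply integral_congr_ae
        filter_upwards [bset_ae hν] with y hy
        have e1 := aff_pos h0 (hcd y hy)
        have e2 := hlt l h1
        have : 1 + l * (c * (y - x)) ≠ 0 := (e2.trans_le e1).ne'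
        rw [← mul_div_assoc, inv_eq_one_div, eq_sub_iff_add_eq, ← add_div, div_self this]
      rw [this, integral_sub (integrable_const 1) ((hquot l h0 h1).const_mul l),
        integral_const_mul]
      simp [hH]
    rw [e3, ofReal_integral_eq_lintegral_ofReal (hinvint l h0 h1)]
    · apply lintegral_congr_ae
      filter_upwards [bset_ae hν] with y hy
      have e1 := aff_pos h0 (hcd y hy)
      have e2 := hlt l h1
      rw [ENNReal.ofReal_inv_of_pos (e2.trans_le e1)]
    · filter_upwards [bset_ae hν] with y hy
      have e1 := aff_pos h0 (hcd y hy)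
      have e2 := hlt l h1
      exact (inv_pos.mpr (e2.trans_le e1)).le
  have hH0 : 0 < H 0 := by
    have : H 0 = c * (mmean ν - x) := by
      simp only [hH, zero_mul, add_zero, div_one]
      rw [integral_const_mul, integral_sub (bset_int hν) (integrable_const x)]
      simp [mmean]
    rwa [this]
  have hd1 : 0 < 1 / d := by positivity
  by_cases hA : ∃ b, 0 ≤ b ∧ b < 1 / d ∧ H b ≤ 0
  · obtain ⟨b, hb0, hb1, hb⟩ := hA
    have hcont : ContinuousOn H (Set.Icc 0 b) := by
      refine continuousOn_of_dominated (bound := fun _ => M * (1 - b * d)⁻¹) ?_ ?_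
        (integrable_const _) ?_
      · intro l _
        exact (by fun_prop : Measurable _).aestronglyMeasurable
      · intro l hl
        filter_upwards [bset_ae hν] with y hy
        have e1 := aff_pos hl.1 (hcd y hy)
        have e2 := hlt b hb1
        have e3 : 1 - b * d ≤ 1 + l * (c * (y - x)) := by
          refine le_trans ?_ e1
          have := mul_le_mul_of_nonneg_right hl.2 hd.le
          linarith
        rw [Real.norm_eq_abs, div_eq_mul_inv, abs_mul,
          abs_of_pos (inv_pos.mpr (e2.trans_le e3))]
        exact mul_le_mul (hbd y hy) (inv_anti₀ e2 e3) (inv_pos.mpr (e2.trans_le e3)).le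
          ((abs_nonneg _).trans (hbd y hy))
      · filter_upwards [bset_ae hν] with y hy
        refine ContinuousOn.div (by fun_prop) (by fun_prop) ?_
        intro l hl
        have e1 := aff_pos hl.1 (hcd y hy)
        have e2 := hlt l (hl.2.trans_lt hb1)
        exact (e2.trans_le e1).ne'
    obtain ⟨l, hl, hl2⟩ := intermediate_value_Icc' hb0 hcont ⟨hb, hH0.le⟩
    have hlpos : 0 < l := by
      rcases hl.1.eq_or_lt with h | h
      · rw [← h] at hl2; exact absurd hl2 hH0.ne'
      · exact h
    refine ⟨l, ⟨hlpos, (hl.2.trans_lt hb1).le⟩, ?_, ?_⟩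
    · rw [hmass l hl.1 (hl.2.trans_lt hb1), hl2]; simp
    · rw [hmass l hl.1 (hl.2.trans_lt hb1), hl2]; simp
  · push Not at hA
    refine ⟨1 / d, ⟨hd1, le_rfl⟩, ?_, ?_⟩
    · obtain ⟨u, -, hu2, hu3⟩ := exists_seq_strictMono_tendsto' hd1
      have hlim : ∀ y, Tendsto (fun n => (ENNReal.ofReal (1 + u n * (c * (y - x))))⁻¹) atTop
          (nhds (ENNReal.ofReal (1 + (1 / d) * (c * (y - x))))⁻¹) := by
        intro y
        exact tendsto_inv_iff.mpr
          (ENNReal.tendsto_ofReal (tendsto_const_nhds.add (hu3.mul_const _)))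
      calc ∫⁻ y, (ENNReal.ofReal (1 + (1 / d) * (c * (y - x))))⁻¹ ∂ν
          = ∫⁻ y, liminf (fun n => (ENNReal.ofReal (1 + u n * (c * (y - x))))⁻¹) atTop ∂ν := by
            apply lintegral_congr
            intro y
            rw [(hlim y).liminf_eq]
        _ ≤ liminf (fun n => ∫⁻ y, (ENNReal.ofReal (1 + u n * (c * (y - x))))⁻¹ ∂ν) atTop :=
            lintegral_liminf_le (fun n => by fun_prop)
        _ ≤ liminf (fun _ : ℕ => (1:ℝ≥0∞)) atTop := by
            refine liminf_le_liminf (Eventually.of_forall fun n => ?_)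
            rw [hmass _ (hu2 n).1.le (hu2 n).2, ENNReal.ofReal_le_one]
            have := mul_pos (hu2 n).1 (hA _ (hu2 n).1.le (hu2 n).2)
            linarith
        _ = 1 := by simp
    · rw [hce]
      have : 1 + 1 / d * -d = 0 := by field_simp; ring
      rw [this]; simp

lemma main_gen {ν : Measure ℝ} (hν : ν ∈ Bset) (c x e d : ℝ) (he : e ∈ Set.Icc (0:ℝ) 1)
    (hd : 0 < d) (hce : c * (e - x) = -d) (hcd : ∀ y ∈ Set.Icc (0:ℝ) 1, -d ≤ c * (y - x))
    (S : Set (Measure ℝ)) (hS : ∀ κ, κ ∈ S ↔ κ ∈ Bset ∧ c * (mmean κ - x) ≤ 0) :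
    (((⨅ κ ∈ S, KLdiv ν κ : ℝ≥0∞)) : EReal) =
      ⨆ l ∈ Set.Icc (0:ℝ) (1 / d), integralEReal ν (fun y => elog (1 + l * (c * (y - x)))) := by
  have := hν.1
  have hg : ∀ l ∈ Set.Icc (0:ℝ) (1 / d), ∀ y ∈ Set.Icc (0:ℝ) 1, 0 ≤ 1 + l * (c * (y - x)) := by
    intro l hl y hy
    have e1 := aff_pos hl.1 (hcd y hy)
    have e2 := hl.2
    rw [le_div_iff₀ hd] at e2
    linarith
  have h0 : (0 : EReal) ≤
      ⨆ l ∈ Set.Icc (0:ℝ) (1 / d), integralEReal ν (fun y => elog (1 + l * (c * (y - x)))) := by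
    refine le_trans ?_ (le_iSup₂ (0:ℝ) ⟨le_rfl, by positivity⟩)
    rw [intER_real ν (fun y => 1 + 0 * (c * (y - x))) (by simp) (by simp)]
    simp
  apply le_antisymm
  · by_cases hm : c * (mmean ν - x) ≤ 0
    · have : (⨅ κ ∈ S, KLdiv ν κ) ≤ 0 := by
        refine (iInf₂_le ν ((hS ν).2 ⟨hν, hm⟩)).trans ?_
        have hk : ν ≪ ν ∧ Integrable (llr ν ν) ν :=
          ⟨Measure.AbsolutelyContinuous.rfl, (integrable_zero _ _ _).congr (llr_self ν).symm⟩
        rw [KLdiv, if_pos hk, integral_congr_ae (llr_self ν)]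
        simp
      rw [nonpos_iff_eq_zero.mp this]
      simpa using h0
    · obtain ⟨l, hl, h1, h2⟩ := exists_dual hν c x e d he hd hce hcd (not_le.mp hm)
      have hl' : l ∈ Set.Icc (0:ℝ) (1 / d) := ⟨hl.1.le, hl.2⟩
      obtain ⟨κ, hκ, hκm, hκl⟩ := primal hν l c x e he hl.1 (hg l hl') h1 h2
      have h3 : (⨅ κ ∈ S, KLdiv ν κ) ≤ KLdiv ν κ := iInf₂_le κ ((hS κ).2 ⟨hκ, hκm⟩)
      refine (EReal.coe_ennreal_le_coe_ennreal_iff.mpr h3).trans (hκl.trans (max_le ?_ h0))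
      exact le_iSup₂ (f := fun l (_ : l ∈ Set.Icc (0:ℝ) (1 / d)) =>
        integralEReal ν (fun y => elog (1 + l * (c * (y - x))))) l hl'
  · refine iSup₂_le fun l hl => ?_
    have hw : ∀ κ ∈ S, integralEReal ν (fun y => elog (1 + l * (c * (y - x)))) ≤
        (KLdiv ν κ : EReal) := fun κ hκ =>
      weak_dual hν ((hS κ).1 hκ).1 l c x hl.1 (hg l hl) ((hS κ).1 hκ).2
    have h1 : (integralEReal ν (fun y => elog (1 + l * (c * (y - x))))).toENNReal ≤
        ⨅ κ ∈ S, KLdiv ν κ := by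
      refine le_iInf₂ fun κ hκ => ?_
      have := EReal.toENNReal_le_toENNReal (hw κ hκ)
      simpa using this
    refine le_trans ?_ (EReal.coe_ennreal_le_coe_ennreal_iff.mpr h1)
    rw [EReal.coe_toENNReal_eq_max]
    exact le_max_right _ _

/-- Dual representation of `KL_inf` for bounded distributions: for every
`ν ∈ B` and `x ∈ (0,1)`,
`KL_inf^U(ν,B,x) = sup_{λ ∈ [0,1/(1−x)]} E_ν[log(1 − λ(X−x))]` and
`KL_inf^L(ν,B,x) = sup_{λ ∈ [0,1/x]} E_ν[log(1 + λ(X−x))]`,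
with the convention `log z = −∞` for `z ≤ 0`. -/
theorem stmt_15 (ν : Measure ℝ) (hν : ν ∈ Bset) (x : ℝ) (hx : x ∈ Set.Ioo (0:ℝ) 1) :
    (((KLinfU ν x : ℝ≥0∞) : EReal) =
      ⨆ l ∈ Set.Icc (0:ℝ) (1 / (1 - x)),
        integralEReal ν (fun y => elog (1 - l * (y - x)))) ∧
    (((KLinfL ν x : ℝ≥0∞) : EReal) =
      ⨆ l ∈ Set.Icc (0:ℝ) (1 / x),
        integralEReal ν (fun y => elog (1 + l * (y - x)))) := by
  obtain ⟨hx0, hx1⟩ := hx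
  constructor
  · have h := main_gen hν (-1) x 1 (1 - x) (by simp) (by linarith) (by ring)
      (fun y hy => by linarith [hy.2]) {κ ∈ Bset | x ≤ mmean κ} (by
        intro κ
        simp only [Set.mem_ofPred_eq]
        refine and_congr_right fun _ => ?_
        constructor <;> intro h <;> linarith)
    rw [KLinfU, h]
    simp only [neg_one_mul, mul_neg, ← sub_eq_add_neg]
  · have h := main_gen hν 1 x 0 x (by simp) hx0 (by ring)
      (fun y hy => by linarith [hy.1]) {κ ∈ Bset | mmean κ ≤ x} (by
        intro κ
        simp only [Set.mem_ofPred_eq]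
        refine and_congr_right fun _ => ?_
        constructor <;> intro h <;> linarith)
    rw [KLinfL, h]
    simp only [one_mul]
end
end

section
/- (Strict convexity of KL_inf for bounded distributions.) For every probability distribution ν supported on [0,1] with mean m(ν) ∈ (0,1), the map x ↦ KL_inf^U(ν,B,x) is strictly convex on (m(ν), 1], and the map x ↦ KL_inf^L(ν,B,x) is strictly convex on [0, m(ν)). -/
open MeasureTheory ProbabilityTheory Filter Set
open scoped ENNReal

noncomputable section
open scoped Classical

/-- Generalized one-sided `KL_inf` for the statistic `T`. -/
def GKL (T : ℝ → ℝ) (ν : Measure ℝ) (x : ℝ) : ℝ≥0∞ :=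
  ⨅ κ ∈ {κ ∈ Bset | x ≤ ∫ t, T t ∂κ}, KLdiv ν κ

lemma Bset_ae {κ : Measure ℝ} (h : κ ∈ Bset) : ∀ᵐ t ∂κ, t ∈ Set.Icc (0:ℝ) 1 := h.2

lemma integrable_T {T : ℝ → ℝ} (hTm : Measurable T)
    (hT : ∀ t ∈ Set.Icc (0:ℝ) 1, T t ∈ Set.Icc (0:ℝ) 1) {κ : Measure ℝ} (h : κ ∈ Bset) :
    Integrable T κ := by
  have := h.1
  refine Integrable.of_bound hTm.aestronglyMeasurable 1 ?_
  filter_upwards [Bset_ae h] with t ht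
  have := hT t ht
  rw [Real.norm_eq_abs, abs_le]
  constructor <;> linarith [this.1, this.2]

lemma integral_ell {T : ℝ → ℝ} (hTm : Measurable T)
    (hT : ∀ t ∈ Set.Icc (0:ℝ) 1, T t ∈ Set.Icc (0:ℝ) 1) {κ : Measure ℝ} (h : κ ∈ Bset) (l z : ℝ) :
    Integrable (fun t => 1 - l * (T t - z)) κ ∧
    ∫ t, (1 - l * (T t - z)) ∂κ = 1 - l * ((∫ t, T t ∂κ) - z) := by
  have := h.1
  have hi := integrable_T hTm hT h
  have h1 : Integrable (fun t => l * (T t - z)) κ := (hi.sub (integrable_const z)).const_mul l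
  refine ⟨(integrable_const 1).sub h1, ?_⟩
  rw [integral_sub (integrable_const 1) h1, integral_const_mul,
    integral_sub hi (integrable_const z)]
  simp

lemma weak {T : ℝ → ℝ} (hTm : Measurable T)
    (hT : ∀ t ∈ Set.Icc (0:ℝ) 1, T t ∈ Set.Icc (0:ℝ) 1) {ν κ : Measure ℝ} (hν : ν ∈ Bset)
    (h : κ ∈ Bset) {l z x : ℝ} (hl : 0 < l) (hlz : l * (1 - z) ≤ 1)
    (hx1 : x < 1) (hx : x ≤ ∫ t, T t ∂κ)
    (hpos : ∀ᵐ t ∂ν, 0 < 1 - l * (T t - z))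
    (hint : Integrable (fun t => Real.log (1 - l * (T t - z))) ν) :
    ENNReal.ofReal ((∫ t, Real.log (1 - l * (T t - z)) ∂ν) - Real.log (1 + l * (z - x)))
      ≤ KLdiv ν κ := by
  have := h.1
  have := hν.1
  unfold KLdiv
  split_ifs with hc
  swap
  · exact le_top
  obtain ⟨hac, hllr⟩ := hc
  apply ENNReal.ofReal_le_ofReal
  set D := 1 + l * (z - x) with hD
  have hDpos : 0 < D := by nlinarith
  set ρ : ℝ → ℝ := fun t => (ν.rnDeriv κ t).toReal with hρ
  have hρpos : ∀ᵐ t ∂ν, 0 < ρ t := by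
    filter_upwards [Measure.rnDeriv_pos hac, hac (Measure.rnDeriv_lt_top ν κ)] with t h1 h2
    exact ENNReal.toReal_pos h1.ne' h2.ne
  obtain ⟨hei, hev⟩ := integral_ell hTm hT h l z
  have hell0 : ∀ᵐ t ∂κ, 0 ≤ 1 - l * (T t - z) := by
    filter_upwards [Bset_ae h] with t ht
    have := (hT t ht).2
    nlinarith
  -- the quotient
  have hmeas : Measurable (fun t => (1 - l * (T t - z)) / ρ t) := by
    have : Measurable ρ := (Measure.measurable_rnDeriv ν κ).ennreal_toReal
    fun_prop
  have hli : ∫⁻ t, ENNReal.ofReal ((1 - l * (T t - z)) / ρ t) ∂ν ≤ ENNReal.ofReal D := by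
    calc ∫⁻ t, ENNReal.ofReal ((1 - l * (T t - z)) / ρ t) ∂ν
        = ∫⁻ t, ENNReal.ofReal ((1 - l * (T t - z)) / ρ t) ∂(κ.withDensity (ν.rnDeriv κ)) := by
          rw [Measure.withDensity_rnDeriv_eq ν κ hac]
      _ = ∫⁻ t, ν.rnDeriv κ t * ENNReal.ofReal ((1 - l * (T t - z)) / ρ t) ∂κ := by
          rw [lintegral_withDensity_eq_lintegral_mul _ (Measure.measurable_rnDeriv ν κ)
            hmeas.ennreal_ofReal]
          rfl
      _ ≤ ∫⁻ t, ENNReal.ofReal (1 - l * (T t - z)) ∂κ := by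
          apply lintegral_mono_ae
          filter_upwards [Measure.rnDeriv_lt_top ν κ, hell0] with t h1 h2
          by_cases h0 : ν.rnDeriv κ t = 0
          · simp [h0]
          · have hp : 0 < ρ t := ENNReal.toReal_pos h0 h1.ne
            rw [← ENNReal.ofReal_toReal h1.ne, ← ENNReal.ofReal_mul ENNReal.toReal_nonneg]
            apply ENNReal.ofReal_le_ofReal
            change ρ t * _ ≤ _
            rw [mul_div_cancel₀ _ hp.ne']
      _ = ENNReal.ofReal (∫ t, (1 - l * (T t - z)) ∂κ) :=
          (ofReal_integral_eq_lintegral_ofReal hei hell0).symm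
      _ ≤ ENNReal.ofReal D := by
          apply ENNReal.ofReal_le_ofReal
          rw [hev, hD]
          nlinarith
  have hq0 : 0 ≤ᵐ[ν] fun t => (1 - l * (T t - z)) / ρ t := by
    filter_upwards [hρpos, hpos] with t h1 h2
    positivity
  have hqi : Integrable (fun t => (1 - l * (T t - z)) / ρ t) ν :=
    ⟨hmeas.aestronglyMeasurable, by
      rw [hasFiniteIntegral_iff_ofReal hq0]
      exact hli.trans_lt ENNReal.ofReal_lt_top⟩
  have hqv : ∫ t, (1 - l * (T t - z)) / ρ t ∂ν ≤ D := by
    rw [integral_eq_lintegral_of_nonneg_ae hq0 hmeas.aestronglyMeasurable]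
    exact ENNReal.toReal_le_of_le_ofReal hDpos.le hli
  have key : ∫ t, (Real.log (1 - l * (T t - z)) - llr ν κ t) ∂ν
      ≤ ∫ t, ((Real.log D - 1) + D⁻¹ * ((1 - l * (T t - z)) / ρ t)) ∂ν := by
    apply integral_mono_ae (hint.sub hllr) ((integrable_const _).add (hqi.const_mul _))
    filter_upwards [hρpos, hpos] with t h1 h2
    change Real.log (1 - l * (T t - z)) - Real.log (ρ t) ≤
      (Real.log D - 1) + D⁻¹ * ((1 - l * (T t - z)) / ρ t)
    rw [← Real.log_div h2.ne' h1.ne']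
    have h3 : 0 < (1 - l * (T t - z)) / ρ t := by positivity
    have h4 := Real.log_le_sub_one_of_pos (mul_pos (inv_pos.2 hDpos) h3)
    rw [Real.log_mul (inv_pos.2 hDpos).ne' h3.ne', Real.log_inv] at h4
    linarith
  rw [integral_sub hint hllr, integral_add (integrable_const _) (hqi.const_mul _),
    integral_const_mul] at key
  have : D⁻¹ * ∫ t, (1 - l * (T t - z)) / ρ t ∂ν ≤ 1 := by
    rw [inv_mul_le_iff₀ hDpos]; linarith
  simp at key
  linarith

lemma attain {T : ℝ → ℝ} (hTm : Measurable T)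
    (hT : ∀ t ∈ Set.Icc (0:ℝ) 1, T t ∈ Set.Icc (0:ℝ) 1) {e : ℝ} (he : e ∈ Set.Icc (0:ℝ) 1)
    (hTe : T e = 1) {ν : Measure ℝ} (hν : ν ∈ Bset) {l z : ℝ} (hl : 0 < l) (hlz : l * (1 - z) ≤ 1)
    (hM : ∫⁻ t, (ENNReal.ofReal (1 - l * (T t - z)))⁻¹ ∂ν ≤ 1)
    (hM' : ∫⁻ t, (ENNReal.ofReal (1 - l * (T t - z)))⁻¹ ∂ν = 1 ∨ l * (1 - z) = 1) :
    (∀ᵐ t ∂ν, 0 < 1 - l * (T t - z)) ∧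
    Integrable (fun t => Real.log (1 - l * (T t - z))) ν ∧
    0 ≤ ∫ t, Real.log (1 - l * (T t - z)) ∂ν ∧
    GKL T ν z ≤ ENNReal.ofReal (∫ t, Real.log (1 - l * (T t - z)) ∂ν) := by
  have := hν.1
  set L : ℝ → ℝ := fun t => 1 - l * (T t - z) with hL
  have hLm : Measurable L := by fun_prop
  have hLm' : Measurable (fun t => (ENNReal.ofReal (L t))) := hLm.ennreal_ofReal
  have hinvm : Measurable (fun t => (ENNReal.ofReal (L t))⁻¹) := hLm'.inv
  have hpos : ∀ᵐ t ∂ν, 0 < L t := by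
    filter_upwards [ae_lt_top hinvm (hM.trans_lt ENNReal.one_lt_top).ne] with t ht
    simpa using ht
  have hinv : ∀ᵐ t ∂ν, ENNReal.ofReal (L t)⁻¹ = (ENNReal.ofReal (L t))⁻¹ := by
    filter_upwards [hpos] with t ht
    exact ENNReal.ofReal_inv_of_pos ht
  have hM2 : ∫⁻ t, ENNReal.ofReal (L t)⁻¹ ∂ν ≤ 1 := by
    rw [lintegral_congr_ae hinv]; exact hM
  have hi0 : 0 ≤ᵐ[ν] fun t => (L t)⁻¹ := by
    filter_upwards [hpos] with t ht
    simp only [Pi.zero_apply]; positivity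
  have hinvi : Integrable (fun t => (L t)⁻¹) ν :=
    ⟨hLm.inv.aestronglyMeasurable, by
      rw [hasFiniteIntegral_iff_ofReal hi0]
      exact hM2.trans_lt ENNReal.one_lt_top⟩
  have hinvv : ∫ t, (L t)⁻¹ ∂ν ≤ 1 := by
    rw [integral_eq_lintegral_of_nonneg_ae hi0 hLm.inv.aestronglyMeasurable]
    exact ENNReal.toReal_le_of_le_ofReal zero_le_one (by simpa using hM2)
  obtain ⟨hLi, -⟩ := integral_ell hTm hT hν l z
  have hlogi : Integrable (fun t => Real.log (L t)) ν := by
    refine Integrable.mono' (hLi.add hinvi) (Real.measurable_log.comp hLm).aestronglyMeasurable ?_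
    filter_upwards [hpos] with t ht
    have h1 := Real.log_le_sub_one_of_pos ht
    have h2 := Real.one_sub_inv_le_log_of_pos ht
    have h3 : 0 < (L t)⁻¹ := by positivity
    rw [Real.norm_eq_abs, abs_le]
    change -(L t + (L t)⁻¹) ≤ _ ∧ _ ≤ (L t + (L t)⁻¹)
    constructor <;> linarith
  refine ⟨hpos, hlogi, ?_, ?_⟩
  · have : ∫ t, (1 - (L t)⁻¹) ∂ν ≤ ∫ t, Real.log (L t) ∂ν := by
      apply integral_mono_ae ((integrable_const _).sub hinvi) hlogi
      filter_upwards [hpos] with t ht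
      exact Real.one_sub_inv_le_log_of_pos ht
    rw [integral_sub (integrable_const _) hinvi] at this
    simp at this
    linarith
  set M := ∫⁻ t, (ENNReal.ofReal (L t))⁻¹ ∂ν with hMdef
  set κ : Measure ℝ := ν.withDensity (fun t => (ENNReal.ofReal (L t))⁻¹) +
    (1 - M) • Measure.dirac e with hκ
  have hκB : κ ∈ Bset := by
    constructor
    · constructor
      simp only [hκ, Measure.add_apply, Measure.smul_apply, smul_eq_mul]
      rw [withDensity_apply _ MeasurableSet.univ]
      simp only [Measure.restrict_univ, measure_univ, mul_one]
      exact add_tsub_cancel_of_le hM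
    · simp only [hκ, Measure.add_apply, Measure.smul_apply, smul_eq_mul]
      rw [withDensity_absolutelyContinuous ν _ hν.2, Measure.dirac_apply' _ measurableSet_Icc.compl]
      simp [he.1, he.2]
  have := hκB.1
  have hzero : (1 - M) * ENNReal.ofReal (L e) = 0 := by
    rcases hM' with h | h
    · simp [h]
    · have : L e = 0 := by simp only [hL, hTe]; linarith
      simp [this]
  have hwd : κ.withDensity (fun t => ENNReal.ofReal (L t)) = ν := by
    rw [hκ, withDensity_add_measure, withDensity_smul_measure, ← withDensity_mul _ hinvm hLm']
    have h1 : (1 - M) • (Measure.dirac e).withDensity (fun t => ENNReal.ofReal (L t)) = 0 := by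
      ext s hs
      rw [Measure.smul_apply, withDensity_apply _ hs]
      have : ∫⁻ t in s, ENNReal.ofReal (L t) ∂(Measure.dirac e) ≤ ENNReal.ofReal (L e) := by
        refine (setLIntegral_le_lintegral s _).trans ?_
        rw [lintegral_dirac' _ hLm']
      have h2 : (1 - M) * ∫⁻ t in s, ENNReal.ofReal (L t) ∂(Measure.dirac e) ≤ 0 :=
        hzero ▸ mul_le_mul_right this (1 - M)
      simpa using h2
    rw [h1, add_zero]
    have : ((fun t => (ENNReal.ofReal (L t))⁻¹) * fun t => ENNReal.ofReal (L t)) =ᵐ[ν] 1 := by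
      filter_upwards [hpos] with t ht
      simp only [Pi.mul_apply, Pi.one_apply]
      exact ENNReal.inv_mul_cancel (by simpa using ht) ENNReal.ofReal_ne_top
    rw [withDensity_congr_ae this, withDensity_one]
  have hac : ν ≪ κ := by
    rw [← hwd]; exact withDensity_absolutelyContinuous _ _
  have hrn : ν.rnDeriv κ =ᵐ[ν] fun t => ENNReal.ofReal (L t) := by
    apply hac.ae_eq
    have := Measure.rnDeriv_withDensity κ hLm'
    rwa [hwd] at this
  have hllr : llr ν κ =ᵐ[ν] fun t => Real.log (L t) := by
    filter_upwards [hrn, hpos] with t h1 h2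
    simp only [llr, h1, ENNReal.toReal_ofReal h2.le]
  have hL0 : 0 ≤ᵐ[κ] L := by
    filter_upwards [Bset_ae hκB] with t ht
    have := (hT t ht).2
    simp only [hL, Pi.zero_apply]
    nlinarith
  have hmean : z ≤ ∫ t, T t ∂κ := by
    obtain ⟨h1, h2⟩ := integral_ell hTm hT hκB l z
    have h3 : ∫ t, L t ∂κ = 1 := by
      rw [integral_eq_lintegral_of_nonneg_ae hL0 hLm.aestronglyMeasurable]
      have : ∫⁻ t, ENNReal.ofReal (L t) ∂κ = 1 := by
        rw [← setLIntegral_univ, ← withDensity_apply _ MeasurableSet.univ, hwd, measure_univ]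
      rw [this]; simp
    rw [h3] at h2
    have h4 : l * ((∫ t, T t ∂κ) - z) = 0 := by linarith
    rcases mul_eq_zero.1 h4 with h5 | h5 <;> linarith
  refine (iInf₂_le κ ⟨hκB, hmean⟩).trans ?_
  unfold KLdiv
  rw [if_pos ⟨hac, hlogi.congr hllr.symm⟩, integral_congr_ae hllr]

lemma core {T : ℝ → ℝ} (hTm : Measurable T)
    (hT : ∀ t ∈ Set.Icc (0:ℝ) 1, T t ∈ Set.Icc (0:ℝ) 1)
    {ν : Measure ℝ} (hν : ν ∈ Bset) {z : ℝ} (hz : ∫ t, T t ∂ν < z) (hz1 : z < 1) :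
    ∃ l : ℝ, 0 < l ∧ l * (1 - z) ≤ 1 ∧
    ∫⁻ t, (ENNReal.ofReal (1 - l * (T t - z)))⁻¹ ∂ν ≤ 1 ∧
    (∫⁻ t, (ENNReal.ofReal (1 - l * (T t - z)))⁻¹ ∂ν = 1 ∨ l * (1 - z) = 1) := by
  have := hν.1
  have hz0 : 0 ≤ z := by
    refine le_trans ?_ hz.le
    apply integral_nonneg_of_ae
    filter_upwards [Bset_ae hν] with t ht using (hT t ht).1
  set φ : ℝ → ℝ := fun l => ∫ t, (T t - z) / (1 - l * (T t - z)) ∂ν with hφ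
  have hLge : ∀ l c : ℝ, 0 ≤ l → l ≤ c → ∀ t ∈ Set.Icc (0:ℝ) 1,
      1 - c * (1 - z) ≤ 1 - l * (T t - z) := by
    intro l c h0 h1 t ht
    have h2 := (hT t ht).2
    nlinarith [mul_le_mul_of_nonneg_left (sub_le_sub_right h2 z) h0,
      mul_le_mul_of_nonneg_right h1 (sub_nonneg.2 hz1.le)]
  have hbd : ∀ l c : ℝ, 0 ≤ l → l ≤ c → c * (1 - z) < 1 → ∀ᵐ t ∂ν,
      ‖(T t - z) / (1 - l * (T t - z))‖ ≤ (1 - c * (1 - z))⁻¹ := by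
    intro l c h0 h1 h2
    filter_upwards [Bset_ae hν] with t ht
    have h3 := hLge l c h0 h1 t ht
    have h4 := hT t ht
    have h5 : 0 < 1 - c * (1 - z) := by linarith
    rw [norm_div, Real.norm_eq_abs, Real.norm_eq_abs, abs_of_pos (h5.trans_le h3), div_eq_mul_inv,
      ← one_mul (1 - c * (1 - z))⁻¹]
    have h6 : |T t - z| ≤ 1 := by rw [abs_le]; constructor <;> linarith [h4.1, h4.2]
    have h7 : 0 ≤ (1 - l * (T t - z))⁻¹ := (inv_pos.2 (h5.trans_le h3)).le
    gcongr
  have hmeas : ∀ l, Measurable (fun t => (T t - z) / (1 - l * (T t - z))) := by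
    intro l; fun_prop
  have hcont : ∀ c : ℝ, c * (1 - z) < 1 → ContinuousOn φ (Set.Icc 0 c) := by
    intro c hc
    apply continuousOn_of_dominated (bound := fun _ => (1 - c * (1 - z))⁻¹)
    · intro l _; exact (hmeas l).aestronglyMeasurable
    · intro l hl; exact hbd l c hl.1 hl.2 hc
    · exact integrable_const _
    · filter_upwards [Bset_ae hν] with t ht
      apply ContinuousOn.div (by fun_prop) (by fun_prop)
      intro l hl
      have := hLge l c hl.1 hl.2 t ht
      linarith
  have hφ0 : φ 0 < 0 := by
    simp only [hφ, zero_mul, sub_zero, div_one]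
    rw [integral_sub (integrable_T hTm hT hν) (integrable_const _)]
    simp; exact hz
  -- the total mass
  have hmass : ∀ l : ℝ, 0 ≤ l → l * (1 - z) < 1 →
      ∫⁻ t, (ENNReal.ofReal (1 - l * (T t - z)))⁻¹ ∂ν = ENNReal.ofReal (1 + l * φ l) := by
    intro l h0 h1
    have hi : Integrable (fun t => (T t - z) / (1 - l * (T t - z))) ν :=
      Integrable.of_bound (hmeas l).aestronglyMeasurable _ (hbd l l h0 le_rfl h1)
    have hi2 : Integrable (fun t => 1 + l * ((T t - z) / (1 - l * (T t - z)))) ν :=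
      (integrable_const _).add (hi.const_mul _)
    have heq : ∀ᵐ t ∂ν, 0 < 1 - l * (T t - z) ∧
        1 + l * ((T t - z) / (1 - l * (T t - z))) = (1 - l * (T t - z))⁻¹ := by
      filter_upwards [Bset_ae hν] with t ht
      have h3 := hLge l l h0 le_rfl t ht
      have h4 : 0 < 1 - l * (T t - z) := by linarith
      refine ⟨h4, ?_⟩
      field_simp
      ring
    have : 1 + l * φ l = ∫ t, (1 + l * ((T t - z) / (1 - l * (T t - z)))) ∂ν := by
      rw [integral_add (integrable_const _) (hi.const_mul _), integral_const_mul]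
      simp [hφ]
    rw [this, ofReal_integral_eq_lintegral_ofReal hi2]
    · apply lintegral_congr_ae
      filter_upwards [heq] with t ht
      rw [ht.2, ENNReal.ofReal_inv_of_pos ht.1]
    · filter_upwards [heq] with t ht
      rw [ht.2]
      exact (inv_pos.2 ht.1).le
  by_cases hex : ∃ c, 0 < c ∧ c * (1 - z) < 1 ∧ 0 ≤ φ c
  · obtain ⟨c, hc0, hc1, hc2⟩ := hex
    obtain ⟨l, hl, hl2⟩ := intermediate_value_Icc hc0.le (hcont c hc1) ⟨hφ0.le, hc2⟩
    have hlpos : 0 < l := by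
      rcases hl.1.lt_or_eq with h | h
      · exact h
      · rw [← h] at hl2; linarith
    have h1 : l * (1 - z) < 1 := by nlinarith [hl.2]
    have h2 := hmass l hlpos.le h1
    rw [hl2] at h2
    simp only [mul_zero, add_zero, ENNReal.ofReal_one] at h2
    exact ⟨l, hlpos, h1.le, h2.le, Or.inl h2⟩
  · push Not at hex
    have hz' : 0 < 1 - z := by linarith
    set u : ℕ → ℝ := fun n => (1 - z)⁻¹ * (1 - 1 / ((n:ℝ) + 2)) with hu
    have hu0 : ∀ n, 0 < u n := by
      intro n
      have : 1 / ((n:ℝ) + 2) < 1 := by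
        rw [div_lt_one (by positivity)]; linarith [(Nat.cast_nonneg n : (0:ℝ) ≤ n)]
      exact mul_pos (inv_pos.2 hz') (by linarith)
    have hu1 : ∀ n, u n * (1 - z) < 1 := by
      intro n
      have h1 : 0 < 1 / ((n:ℝ) + 2) := by positivity
      have : u n * (1 - z) = 1 - 1 / ((n:ℝ) + 2) := by
        simp only [hu]; field_simp
      linarith
    have hut : Tendsto u atTop (nhds (1 - z)⁻¹) := by
      have h1 : Tendsto (fun n : ℕ => 1 / ((n:ℝ) + 2)) atTop (nhds 0) := by
        simp only [one_div]
        exact (tendsto_atTop_add_const_right atTop (2:ℝ)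
          (tendsto_natCast_atTop_atTop (R := ℝ))).inv_tendsto_atTop
      have h2 := (h1.const_sub 1).const_mul (1 - z)⁻¹
      rw [sub_zero, mul_one] at h2
      exact h2
    have hfin : (1 - z)⁻¹ * (1 - z) = 1 := inv_mul_cancel₀ hz'.ne'
    refine ⟨(1 - z)⁻¹, inv_pos.2 hz', hfin.le, ?_, Or.inr hfin⟩
    have hlim : ∀ t, Tendsto (fun n => (ENNReal.ofReal (1 - u n * (T t - z)))⁻¹) atTop
        (nhds (ENNReal.ofReal (1 - (1 - z)⁻¹ * (T t - z)))⁻¹) := by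
      intro t
      apply Tendsto.inv
      exact ENNReal.tendsto_ofReal ((hut.mul_const _).const_sub 1)
    calc ∫⁻ t, (ENNReal.ofReal (1 - (1 - z)⁻¹ * (T t - z)))⁻¹ ∂ν
        = ∫⁻ t, liminf (fun n => (ENNReal.ofReal (1 - u n * (T t - z)))⁻¹) atTop ∂ν := by
          congr 1; ext t; exact (hlim t).liminf_eq.symm
      _ ≤ liminf (fun n => ∫⁻ t, (ENNReal.ofReal (1 - u n * (T t - z)))⁻¹ ∂ν) atTop := by
          apply lintegral_liminf_le
          intro n
          have : Measurable (fun t => 1 - u n * (T t - z)) := by fun_prop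
          exact this.ennreal_ofReal.inv
      _ ≤ liminf (fun _ : ℕ => (1:ℝ≥0∞)) atTop := by
          refine liminf_le_liminf (Eventually.of_forall fun n => ?_)
          rw [hmass _ (hu0 n).le (hu1 n)]
          rw [← ENNReal.ofReal_one]
          apply ENNReal.ofReal_le_ofReal
          nlinarith [hu0 n, hex (u n) (hu0 n) (hu1 n)]
      _ = 1 := by simp

lemma GKL_top {T : ℝ → ℝ} (hTm : Measurable T)
    (hT : ∀ t ∈ Set.Icc (0:ℝ) 1, T t ∈ Set.Icc (0:ℝ) 1)
    {ν : Measure ℝ} (hν : ν ∈ Bset) (hz : ∫ t, T t ∂ν < 1) : GKL T ν 1 = ⊤ := by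
  have := hν.1
  unfold GKL
  simp only [iInf_eq_top]
  rintro κ ⟨hκ, hm⟩
  have := hκ.1
  unfold KLdiv
  rw [if_neg]
  rintro ⟨hac, -⟩
  have hi := integrable_T hTm hT hκ
  have h0 : 0 ≤ᵐ[κ] fun t => 1 - T t := by
    filter_upwards [Bset_ae hκ] with t ht
    have := (hT t ht).2
    simp only [Pi.zero_apply]; linarith
  have h1 : ∫ t, (1 - T t) ∂κ = 0 := by
    apply le_antisymm _ (integral_nonneg_of_ae h0)
    rw [integral_sub (integrable_const _) hi]
    simp; exact hm
  have h2 := (integral_eq_zero_iff_of_nonneg_ae h0 ((integrable_const _).sub hi)).1 h1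
  have h3 : T =ᵐ[ν] fun _ => (1:ℝ) := by
    filter_upwards [hac h2] with t ht
    have ht' : 1 - T t = 0 := ht
    linarith
  rw [integral_congr_ae h3] at hz
  simp at hz

lemma main {T : ℝ → ℝ} (hTm : Measurable T)
    (hT : ∀ t ∈ Set.Icc (0:ℝ) 1, T t ∈ Set.Icc (0:ℝ) 1) {e : ℝ} (he : e ∈ Set.Icc (0:ℝ) 1)
    (hTe : T e = 1) {ν : Measure ℝ} (hν : ν ∈ Bset) {x y : ℝ}
    (hx : ∫ t, T t ∂ν < x) (hx1 : x ≤ 1) (hy : ∫ t, T t ∂ν < y) (hy1 : y ≤ 1) (hxy : x ≠ y)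
    {a b : ℝ} (ha : 0 < a) (hb : 0 < b) (hab : a + b = 1) :
    GKL T ν (a * x + b * y) <
      ENNReal.ofReal a * GKL T ν x + ENNReal.ofReal b * GKL T ν y := by
  set z := a * x + b * y with hzdef
  have hb' : b = 1 - a := by linarith
  have hz : ∫ t, T t ∂ν < z := by
    rw [hzdef, hb']
    nlinarith [mul_lt_mul_of_pos_left hx ha, mul_lt_mul_of_pos_left hy hb]
  have hz1 : z < 1 := by
    rcases lt_or_eq_of_le hx1 with h | h
    · nlinarith [mul_lt_mul_of_pos_left h ha, mul_le_mul_of_nonneg_left hy1 hb.le]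
    · have h' : y < 1 := lt_of_le_of_ne hy1 (fun h2 => hxy (h.trans h2.symm))
      nlinarith [mul_lt_mul_of_pos_left h' hb, mul_le_mul_of_nonneg_left hx1 ha.le]
  obtain ⟨l, hl, hlz, hM, hM'⟩ := core hTm hT hν hz hz1
  obtain ⟨hpos, hint, hA, hle⟩ := attain hTm hT he hTe hν hl hlz hM hM'
  refine hle.trans_lt ?_
  rcases eq_or_lt_of_le hx1 with h | hx1
  · have h1 : GKL T ν x = ⊤ := by rw [h]; exact GKL_top hTm hT hν (hz.trans hz1)
    rw [h1, ENNReal.mul_top (by simpa using ha), top_add]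
    exact ENNReal.ofReal_lt_top
  rcases eq_or_lt_of_le hy1 with h | hy1
  · have h1 : GKL T ν y = ⊤ := by rw [h]; exact GKL_top hTm hT hν (hz.trans hz1)
    rw [h1, ENNReal.mul_top (by simpa using hb), add_top]
    exact ENNReal.ofReal_lt_top
  set A := ∫ t, Real.log (1 - l * (T t - z)) ∂ν with hAdef
  have hwx : ENNReal.ofReal (A - Real.log (1 + l * (z - x))) ≤ GKL T ν x :=
    le_iInf₂ fun κ hκ => weak hTm hT hν hκ.1 hl hlz hx1 hκ.2 hpos hint
  have hwy : ENNReal.ofReal (A - Real.log (1 + l * (z - y))) ≤ GKL T ν y :=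
    le_iInf₂ fun κ hκ => weak hTm hT hν hκ.1 hl hlz hy1 hκ.2 hpos hint
  have hDx : 0 < 1 + l * (z - x) := by nlinarith
  have hDy : 0 < 1 + l * (z - y) := by nlinarith
  have hstrict := strictConcaveOn_log_Ioi.2 (x := 1 + l * (z - x)) hDx (y := 1 + l * (z - y)) hDy
    (by
      intro h
      have h1 : l * (y - x) = 0 := by linarith
      rcases mul_eq_zero.1 h1 with h2 | h2
      · linarith
      · exact hxy (by linarith)) ha hb hab
  have hone : a • (1 + l * (z - x)) + b • (1 + l * (z - y)) = 1 := by
    simp only [smul_eq_mul, hzdef]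
    rw [hb']; ring
  rw [hone, Real.log_one] at hstrict
  simp only [smul_eq_mul] at hstrict
  calc ENNReal.ofReal A
      < ENNReal.ofReal (a * (A - Real.log (1 + l * (z - x))) +
          b * (A - Real.log (1 + l * (z - y)))) := by
        have : a * (A - Real.log (1 + l * (z - x))) + b * (A - Real.log (1 + l * (z - y)))
          = A - (a * Real.log (1 + l * (z - x)) + b * Real.log (1 + l * (z - y))) := by
          rw [hb']; ring
        rw [this, ENNReal.ofReal_lt_ofReal_iff (by linarith)]
        linarith
    _ ≤ ENNReal.ofReal (a * (A - Real.log (1 + l * (z - x)))) +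
          ENNReal.ofReal (b * (A - Real.log (1 + l * (z - y)))) := ENNReal.ofReal_add_le
    _ = ENNReal.ofReal a * ENNReal.ofReal (A - Real.log (1 + l * (z - x))) +
          ENNReal.ofReal b * ENNReal.ofReal (A - Real.log (1 + l * (z - y))) := by
        rw [ENNReal.ofReal_mul ha.le, ENNReal.ofReal_mul hb.le]
    _ ≤ _ := by gcongr

lemma mean_refl {κ : Measure ℝ} (h : κ ∈ Bset) : ∫ t, (1 - t) ∂κ = 1 - mmean κ := by
  have := h.1
  rw [integral_sub (integrable_const _) (integrable_T (T := fun t => t) measurable_id (fun t ht => ht) h)]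
  simp [mmean]

lemma KLinfL_eq (ν : Measure ℝ) (x : ℝ) : KLinfL ν x = GKL (fun t => 1 - t) ν (1 - x) := by
  unfold KLinfL GKL
  have : {κ ∈ Bset | mmean κ ≤ x} = {κ ∈ Bset | 1 - x ≤ ∫ t, (1 - t) ∂κ} := by
    ext κ
    simp only [Set.mem_ofPred_eq]
    refine and_congr_right fun h => ?_
    rw [mean_refl h]
    constructor <;> intro <;> linarith
  rw [this]

/-- Strict convexity of `KL_inf` for bounded distributions: for `ν ∈ B` with
mean `m(ν) ∈ (0,1)`, `x ↦ KL_inf^U(ν,B,x)` is strictly convex on `(m(ν),1]` and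
`x ↦ KL_inf^L(ν,B,x)` is strictly convex on `[0,m(ν))` (with values in `[0,∞]`, strict
convexity is expressed pointwise). -/
theorem stmt_16 (ν : Measure ℝ) (hν : ν ∈ Bset) (hmean : mmean ν ∈ Set.Ioo (0:ℝ) 1) :
    (∀ x ∈ Set.Ioc (mmean ν) 1, ∀ y ∈ Set.Ioc (mmean ν) 1, x ≠ y →
      ∀ a b : ℝ, 0 < a → 0 < b → a + b = 1 →
        KLinfU ν (a * x + b * y) <
          ENNReal.ofReal a * KLinfU ν x + ENNReal.ofReal b * KLinfU ν y) ∧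
    (∀ x ∈ Set.Ico (0:ℝ) (mmean ν), ∀ y ∈ Set.Ico (0:ℝ) (mmean ν), x ≠ y →
      ∀ a b : ℝ, 0 < a → 0 < b → a + b = 1 →
        KLinfL ν (a * x + b * y) <
          ENNReal.ofReal a * KLinfL ν x + ENNReal.ofReal b * KLinfL ν y) := by
  refine ⟨?_, ?_⟩
  · intro x hx y hy hxy a b ha hb hab
    exact main (T := fun t => t) measurable_id (fun t ht => ht) (e := 1) (by simp) rfl hν
      hx.1 hx.2 hy.1 hy.2 hxy ha hb hab
  · intro x hx y hy hxy a b ha hb hab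
    have h := main (T := fun t => 1 - t) (by fun_prop)
      (fun t ht => ⟨by linarith [ht.2], by linarith [ht.1]⟩) (e := 0) (by simp) (by simp) hν
      (x := 1 - x) (y := 1 - y)
      (by rw [mean_refl hν]; linarith [hx.2]) (by linarith [hx.1])
      (by rw [mean_refl hν]; linarith [hy.2]) (by linarith [hy.1])
      (fun h => hxy (by linarith)) ha hb hab
    have he : a * (1 - x) + b * (1 - y) = 1 - (a * x + b * y) := by
      have hb' : b = 1 - a := by linarith
      rw [hb']; ring
    rw [he] at h
    simpa only [KLinfL_eq] using h
end
end

section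
/- (Continuity of KL_inf for bounded distributions.) Endow the family B of probability distributions on [0,1] with the topology of weak convergence. Then the function (ν, x) ↦ KL_inf^U(ν,B,x) is jointly continuous on B × [0,1), and the function (ν, x) ↦ KL_inf^L(ν,B,x) is jointly continuous on B × (0,1]. -/
open MeasureTheory ProbabilityTheory Filter Set
open scoped ENNReal

noncomputable section
open scoped Classical

/-- The family `B`, viewed inside the space of probability measures on ℝ endowed with the
topology of weak convergence. -/
def BsetW : Set (ProbabilityMeasure ℝ) :=
  {ν | (ν : Measure ℝ) (Set.Icc (0:ℝ) 1)ᶜ = 0}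

open scoped Topology unitInterval

/-- Projection onto the unit interval. -/
def clI (X : ℝ) : I := Set.projIcc (0:ℝ) 1 zero_le_one X

lemma continuous_clI : Continuous clI :=
  continuous_projIcc (h := zero_le_one)

lemma clI_ae {ν : Measure ℝ} (h : ν (Set.Icc (0:ℝ) 1)ᶜ = 0) : ∀ᵐ X ∂ν, ((clI X : I) : ℝ) = X := by
  have : ∀ᵐ X ∂ν, X ∈ Set.Icc (0:ℝ) 1 := by
    rw [ae_iff]; exact h
  filter_upwards [this] with X hX
  simp [clI, Set.projIcc_of_mem zero_le_one hX]

lemma integ_clI (ν : Measure ℝ) [IsFiniteMeasure ν] {φ : I → ℝ} (h : Continuous φ) :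
    Integrable (fun X => φ (clI X)) ν := by
  let b := BoundedContinuousFunction.mkOfCompact (⟨φ, h⟩ : C(I, ℝ))
  exact (b.compContinuous ⟨clI, continuous_clI⟩).integrable ν

lemma contJ {P : Type*} [TopologicalSpace P] {Φ : P × I → ℝ} (h : Continuous Φ) :
    Continuous fun q : ProbabilityMeasure ℝ × P =>
      ∫ X, Φ (q.2, clI X) ∂(q.1 : Measure ℝ) := by
  let c : C(P, C(I, ℝ)) := ContinuousMap.curry ⟨Φ, h⟩
  rw [continuous_iff_continuousAt]
  rintro ⟨ν0, p0⟩
  have h1 : Tendsto (fun q : ProbabilityMeasure ℝ × P => ∫ X, Φ (p0, clI X) ∂(q.1 : Measure ℝ))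
      (𝓝 (ν0, p0)) (𝓝 (∫ X, Φ (p0, clI X) ∂(ν0 : Measure ℝ))) := by
    let b := (BoundedContinuousFunction.mkOfCompact (c p0)).compContinuous
      ⟨clI, continuous_clI⟩
    exact (ProbabilityMeasure.tendsto_iff_forall_integral_tendsto.1
      (continuous_fst.tendsto (ν0, p0))) b
  have h2 : Tendsto (fun q : ProbabilityMeasure ℝ × P =>
      (∫ X, Φ (q.2, clI X) ∂(q.1 : Measure ℝ)) - ∫ X, Φ (p0, clI X) ∂(q.1 : Measure ℝ))
      (𝓝 (ν0, p0)) (𝓝 0) := by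
    have h3 : Tendsto (fun q : ProbabilityMeasure ℝ × P => ‖c q.2 - c p0‖) (𝓝 (ν0, p0)) (𝓝 0) := by
      have : Continuous (fun q : ProbabilityMeasure ℝ × P => ‖c q.2 - c p0‖) := by fun_prop
      simpa using this.tendsto (ν0, p0)
    refine squeeze_zero_norm (fun q => ?_) h3
    rw [← integral_sub]
    · refine (norm_integral_le_of_norm_le_const (C := ‖c q.2 - c p0‖) ?_).trans ?_
      · refine ae_of_all _ fun X => ?_
        exact (c q.2 - c p0).norm_coe_le_norm (clI X)
      · simp
    · exact integ_clI _ (φ := fun u => Φ (q.2, u)) (by fun_prop)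
    · exact integ_clI _ (φ := fun u => Φ (p0, u)) (by fun_prop)
  have := h2.add h1
  simpa [ContinuousAt] using this

/-- The dual density. -/
def gg (x t u : ℝ) : ℝ := ((1 - t) * (1 - x) + t * (1 - u)) / (1 - x)

lemma gg_num_pos {x t u : ℝ} (hx : x < 1) (ht0 : 0 ≤ t) (ht : t < 1) (hu : u ≤ 1) :
    0 < (1 - t) * (1 - x) + t * (1 - u) := by
  have := mul_pos (sub_pos.2 ht) (sub_pos.2 hx)
  have := mul_nonneg ht0 (sub_nonneg.2 hu)
  linarith

lemma gg_pos {x t u : ℝ} (hx : x < 1) (ht0 : 0 ≤ t) (ht : t < 1) (hu : u ≤ 1) :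
    0 < gg x t u := div_pos (gg_num_pos hx ht0 ht hu) (sub_pos.2 hx)

/-- The dual objective. -/
def ff (ν : Measure ℝ) (x t : ℝ) : ℝ := ∫ X, Real.log (gg x t (clI X)) ∂ν

/-- The dual value. -/
def FF (ν : Measure ℝ) (x : ℝ) : ℝ≥0∞ := ⨆ t ∈ Set.Ico (0:ℝ) 1, ENNReal.ofReal (ff ν x t)

lemma cont_gg {x t : ℝ} : Continuous fun u : I => gg x t u := by
  unfold gg; fun_prop

lemma cont_log_gg {x t : ℝ} (hx : x < 1) (ht0 : 0 ≤ t) (ht : t < 1) :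
    Continuous fun u : I => Real.log (gg x t u) :=
  cont_gg.log fun u => (gg_pos hx ht0 ht u.2.2).ne'

lemma ff_concave (ν : Measure ℝ) [IsProbabilityMeasure ν] {x t r : ℝ} (hx : x < 1) (ht0 : 0 ≤ t)
    (ht : t < 1) (hr0 : 0 ≤ r) (hr : r ≤ 1) : r * ff ν x t ≤ ff ν x (r * t) := by
  unfold ff
  have hrt0 : 0 ≤ r * t := mul_nonneg hr0 ht0
  have hrt : r * t < 1 := lt_of_le_of_lt (mul_le_of_le_one_left ht0 hr) ht
  rw [← integral_const_mul]
  refine integral_mono ((integ_clI ν (cont_log_gg hx ht0 ht)).const_mul r)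
    (integ_clI ν (cont_log_gg hx hrt0 hrt)) fun X => ?_
  have hg := gg_pos hx ht0 ht (clI X).2.2
  have := strictConcaveOn_log_Ioi.concaveOn.2 (x := gg x t (clI X)) hg (y := 1)
    (by simp) hr0 (sub_nonneg.2 hr) (by ring)
  simp only [smul_eq_mul, Real.log_one, mul_zero, add_zero] at this
  refine this.trans (le_of_eq ?_)
  congr 1
  have := (sub_pos.2 hx).ne'
  unfold gg
  field_simp
  ring

lemma cont_ff {r : ℝ} (hr0 : 0 ≤ r) (hr : r < 1) :
    Continuous fun q : (ProbabilityMeasure ℝ × Set.Iio (1:ℝ)) × I =>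
      ff (q.1.1 : Measure ℝ) q.1.2 (r * q.2) := by
  have h : Continuous fun w : (Set.Iio (1:ℝ) × I) × I =>
      Real.log (gg w.1.1 (r * w.1.2) w.2) := by
    have hrt : ∀ s : I, r * s < 1 := fun s => lt_of_le_of_lt (mul_le_of_le_one_right hr0 s.2.2) hr
    refine Continuous.log ?_ fun w => (gg_pos w.1.1.2 (mul_nonneg hr0 w.1.2.2.1) (hrt _) w.2.2.2).ne'
    unfold gg
    refine Continuous.div (by fun_prop) (by fun_prop) fun w => ?_
    exact (sub_pos.2 w.1.1.2).ne'
  exact (contJ h).comp (g := fun q : ProbabilityMeasure ℝ × (Set.Iio (1:ℝ) × I) => _)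
    (f := fun q : (ProbabilityMeasure ℝ × Set.Iio (1:ℝ)) × I => (q.1.1, (q.1.2, q.2))) (by fun_prop)

lemma cont_FF : Continuous fun q : ProbabilityMeasure ℝ × Set.Iio (1:ℝ) =>
    FF (q.1 : Measure ℝ) q.2 := by
  rw [continuous_iff_continuousAt]
  intro q0
  refine tendsto_order.2 ⟨fun c hc => ?_, fun c hc => ?_⟩
  · simp only [FF, lt_iSup_iff] at hc ⊢
    obtain ⟨t, ht, hc⟩ := hc
    have h : Continuous fun q : ProbabilityMeasure ℝ × Set.Iio (1:ℝ) =>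
        ENNReal.ofReal (ff (q.1 : Measure ℝ) q.2 (t * (1 : I))) :=
      ENNReal.continuous_ofReal.comp ((cont_ff ht.1 ht.2).comp (f := fun q => (q, (1 : I)))
        (by fun_prop))
    filter_upwards [h.continuousAt.eventually (lt_mem_nhds (a := c) (by simpa using hc))] with q hq
    exact ⟨t, ht, by simpa using hq⟩
  · obtain ⟨c', hc', hcc⟩ := exists_between hc
    have hc't : c' ≠ ⊤ := hcc.ne_top
    have hFt : FF (q0.1 : Measure ℝ) q0.2 ≠ ⊤ := hc'.ne_top
    set a := (FF (q0.1 : Measure ℝ) q0.2).toReal with ha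
    set b := c'.toReal with hb
    have hab : a < b := (ENNReal.toReal_lt_toReal hFt hc't).2 hc'
    have ha0 : 0 ≤ a := ENNReal.toReal_nonneg
    have hb0 : 0 < b := ha0.trans_lt hab
    obtain ⟨r, hr1, hr2⟩ := exists_between (show a / b < 1 from (div_lt_one hb0).2 hab)
    have hr0 : 0 < r := lt_of_le_of_lt (by positivity) hr1
    have harb : a < r * b := (div_lt_iff₀ hb0).1 hr1
    have key : ∀ᶠ q in 𝓝 q0, ∀ s ∈ (Set.univ : Set I),
        ff (q.1 : Measure ℝ) q.2 (r * s) < r * b := by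
      refine isCompact_univ.eventually_forall_of_forall_eventually
        (P := fun q (s : I) => ff ((q : ProbabilityMeasure ℝ × Set.Iio (1:ℝ)).1 : Measure ℝ) q.2
          (r * s) < r * b) fun s _ => ?_
      refine ((cont_ff hr0.le hr2).tendsto (q0, s)).eventually_lt_const ?_
      refine lt_of_le_of_lt ?_ harb
      have hs : r * s ∈ Set.Ico (0:ℝ) 1 :=
        ⟨mul_nonneg hr0.le s.2.1, lt_of_le_of_lt (mul_le_of_le_one_right hr0.le s.2.2) hr2⟩
      have : ENNReal.ofReal (ff (q0.1 : Measure ℝ) q0.2 (r * s)) ≤ FF (q0.1 : Measure ℝ) q0.2 :=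
        le_iSup₂ (f := fun t (_ : t ∈ Set.Ico (0:ℝ) 1) =>
          ENNReal.ofReal (ff (q0.1 : Measure ℝ) q0.2 t)) _ hs
      exact (ENNReal.ofReal_le_iff_le_toReal hFt).1 this
    filter_upwards [key] with q hq
    refine lt_of_le_of_lt ?_ hcc
    refine iSup₂_le fun t ht => ?_
    rw [ENNReal.ofReal_le_iff_le_toReal hc't]
    have h1 := ff_concave (q.1 : Measure ℝ) q.2.2 ht.1 ht.2 hr0.le hr2.le
    have h2 := hq ⟨t, ht.1, ht.2.le⟩ trivial
    exact (le_of_mul_le_mul_left (h1.trans h2.le) hr0)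

lemma KLdiv_eq (μ ν : Measure ℝ) [IsProbabilityMeasure μ] [IsProbabilityMeasure ν] :
    KLdiv μ ν = InformationTheory.klDiv μ ν := by
  rw [InformationTheory.klDiv_def, KLdiv]
  simp

lemma mean_clI {ν : Measure ℝ} (h : ν (Set.Icc (0:ℝ) 1)ᶜ = 0) :
    mmean ν = ∫ X, ((clI X : I) : ℝ) ∂ν :=
  integral_congr_ae ((clI_ae h).mono fun _ hX => hX.symm)

lemma weak_duality {ν κ : Measure ℝ} [IsProbabilityMeasure ν] [IsProbabilityMeasure κ]
    (hκ : κ (Set.Icc (0:ℝ) 1)ᶜ = 0) {x t : ℝ} (hx : x < 1) (hm : x ≤ mmean κ) (ht0 : 0 ≤ t)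
    (ht : t < 1) : ENNReal.ofReal (ff ν x t) ≤ KLdiv ν κ := by
  unfold KLdiv
  split_ifs with h
  swap
  · exact le_top
  obtain ⟨hac, hint⟩ := h
  refine ENNReal.ofReal_le_ofReal ?_
  let f : ℝ → ℝ := fun X => Real.log (gg x t (clI X))
  have hexp : (fun X => Real.exp (f X)) = fun X => gg x t (clI X) := by
    ext X; exact Real.exp_log (gg_pos hx ht0 ht (clI X).2.2)
  have hfν : Integrable f ν := integ_clI ν (cont_log_gg hx ht0 ht)
  have hfκ : Integrable (fun X => Real.exp (f X)) κ := by
    rw [hexp]; exact integ_clI κ cont_gg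
  have h1 := integral_llr_tilted_right hac hfν hfκ hint
  have hP := isProbabilityMeasure_tilted hfκ
  have hac' : ν ≪ κ.tilted f := hac.trans (absolutelyContinuous_tilted hfκ)
  have hint' : Integrable (llr ν (κ.tilted f)) ν := integrable_llr_tilted_right hac hfν hint hfκ
  have h2 := InformationTheory.integral_llr_add_sub_measure_univ_nonneg hac' hint'
  simp only [measureReal_def, measure_univ] at h2
  have h3 : Real.log (∫ X, Real.exp (f X) ∂κ) ≤ 0 := by
    rw [hexp]
    have hi : Integrable (fun X => ((clI X : I) : ℝ)) κ :=
      integ_clI κ (φ := fun u => (u : ℝ)) (by fun_prop)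
    have e : ∫ X, gg x t (clI X) ∂κ = gg x t (mmean κ) := by
      rw [mean_clI hκ]
      unfold gg
      rw [integral_div, integral_add (by fun_prop) (by fun_prop), integral_const_mul t,
        integral_sub (by fun_prop) hi]
      simp
    rw [e]
    have hm1 : mmean κ ≤ 1 := by
      rw [mean_clI hκ]
      calc _ ≤ ∫ X, (1:ℝ) ∂κ := integral_mono hi (by fun_prop) fun X => (clI X).2.2
        _ = 1 := by simp
    refine Real.log_nonpos (gg_pos hx ht0 ht hm1).le ?_
    rw [gg, div_le_one (sub_pos.2 hx)]
    nlinarith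
  have h4 : ff ν x t = ∫ X, f X ∂ν := rfl
  rw [h4]
  simp at h2
  linarith

lemma strong_aux {ν : Measure ℝ} [IsProbabilityMeasure ν] (hν : ν (Set.Icc (0:ℝ) 1)ᶜ = 0)
    {x y t : ℝ} (hy : y < 1) (ht0 : 0 ≤ t) (ht : t < 1)
    (h1 : ∫ X, (gg y t (clI X))⁻¹ ∂ν ≤ 1)
    (h2 : ∫ X, (1 - (clI X : ℝ)) * (gg y t (clI X))⁻¹ ∂ν ≤ 1 - x) :
    KLinfU ν x ≤ ENNReal.ofReal (ff ν y t) := by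
  have hgpos : ∀ X : ℝ, 0 < gg y t (clI X) := fun X => gg_pos hy ht0 ht (clI X).2.2
  have hci : Continuous fun u : I => (gg y t u)⁻¹ :=
    cont_gg.inv₀ fun u => (gg_pos hy ht0 ht u.2.2).ne'
  set h : ℝ → ℝ := fun X => (gg y t (clI X))⁻¹ with hh
  have hhpos : ∀ X, 0 < h X := fun X => inv_pos.2 (hgpos X)
  have hhc : Continuous h := hci.comp continuous_clI
  have hhi : Integrable h ν := integ_clI ν hci
  set m := ∫ X, h X ∂ν with hm
  have hm0 : 0 ≤ m := integral_nonneg fun X => (hhpos X).le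
  set d : ℝ → ℝ≥0∞ := fun X => ENNReal.ofReal (h X) with hd
  have hdm : Measurable d := hhc.measurable.ennreal_ofReal
  set κ₁ := ν.withDensity d with hκ₁
  have hmass : κ₁ Set.univ = ENNReal.ofReal m := by
    rw [hκ₁, withDensity_apply _ MeasurableSet.univ, Measure.restrict_univ, hm,
      ofReal_integral_eq_lintegral_ofReal hhi (ae_of_all _ fun X => (hhpos X).le)]
  have : IsFiniteMeasure κ₁ := ⟨by rw [hmass]; exact ENNReal.ofReal_lt_top⟩
  set κ₂ := ENNReal.ofReal (1 - m) • Measure.dirac (1:ℝ) with hκ₂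
  have : IsFiniteMeasure κ₂ := ⟨by simp [hκ₂]⟩
  set κ := κ₁ + κ₂ with hκ
  have hκP : IsProbabilityMeasure κ := ⟨by
    rw [hκ, Measure.add_apply, hmass, hκ₂]
    simp only [Measure.smul_apply, measure_univ, smul_eq_mul, mul_one]
    rw [← ENNReal.ofReal_add hm0 (by linarith)]
    simp⟩
  have hκB : κ (Set.Icc (0:ℝ) 1)ᶜ = 0 := by
    rw [hκ, Measure.add_apply, hκ₂, withDensity_absolutelyContinuous _ _ hν]
    simp
  have hac1 : ν ≪ κ₁ := withDensity_absolutelyContinuous' hdm.aemeasurable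
    (ae_of_all _ fun X => by simpa [hd] using hhpos X)
  have hac : ν ≪ κ := hac1.trans (Measure.le_add_right le_rfl).absolutelyContinuous
  have hmean : x ≤ mmean κ := by
    have hic : Continuous fun u : I => (1 - (u:ℝ)) := by fun_prop
    have e1 : mmean κ = 1 - ∫ X, (1 - ((clI X : I) : ℝ)) ∂κ := by
      rw [mean_clI hκB, integral_sub (by fun_prop) (integ_clI κ (φ := fun u => (u : ℝ)) (by fun_prop))]
      simp
    have e2 : ∫ X, (1 - ((clI X : I) : ℝ)) ∂κ = ∫ X, (1 - (clI X : ℝ)) * h X ∂ν := by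
      rw [hκ, integral_add_measure (integ_clI _ hic) (integ_clI _ hic), hκ₂, integral_smul_measure,
        integral_dirac, hκ₁, integral_withDensity_eq_integral_toReal_smul hdm
        (ae_of_all _ fun X => ENNReal.ofReal_lt_top)]
      have : ((clI 1 : I) : ℝ) = 1 := by simp [clI]
      rw [this]
      simp only [sub_self, smul_eq_mul]
      rw [mul_zero, add_zero]
      refine integral_congr_ae (ae_of_all _ fun X => ?_)
      simp only
      rw [hd, ENNReal.toReal_ofReal (hhpos X).le, mul_comm]
    rw [e1, e2]
    linarith
  have hk : ∀ᵐ X ∂ν, h X ≤ (κ.rnDeriv ν X).toReal := by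
    filter_upwards [Measure.rnDeriv_add' κ₁ κ₂ ν, Measure.rnDeriv_withDensity ν hdm,
      Measure.rnDeriv_lt_top κ ν] with X a1 a2 a3
    rw [← ENNReal.ofReal_le_iff_le_toReal a3.ne, hκ, a1, Pi.add_apply, a2]
    exact le_self_add
  have hl : ∀ᵐ X ∂ν, llr ν κ X = - Real.log (κ.rnDeriv ν X).toReal := by
    filter_upwards [neg_llr hac] with X hX
    have e : llr κ ν X = Real.log (κ.rnDeriv ν X).toReal := rfl
    rw [Pi.neg_apply, e] at hX
    linarith
  have hle : ∀ᵐ X ∂ν, llr ν κ X ≤ Real.log (gg y t (clI X)) := by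
    filter_upwards [hk, hl] with X a1 a2
    rw [a2]
    have := Real.log_le_log (hhpos X) a1
    rw [hh, Real.log_inv] at this
    linarith
  have hLi := integ_clI ν (cont_log_gg hy ht0 ht)
  have hint : Integrable (llr ν κ) ν := by
    refine (hLi.abs.add (Measure.integrable_toReal_rnDeriv (μ := κ) (ν := ν))).mono'
      (measurable_llr _ _).aestronglyMeasurable ?_
    filter_upwards [hk, hl, hle] with X a1 a2 a3
    have hp : 0 < (κ.rnDeriv ν X).toReal := (hhpos X).trans_le a1
    have b1 := Real.log_le_sub_one_of_pos hp
    rw [Real.norm_eq_abs, abs_le]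
    simp only [Pi.add_apply]
    have b2 := le_abs_self (Real.log (gg y t (clI X)))
    have b3 := abs_nonneg (Real.log (gg y t (clI X)))
    constructor <;> linarith
  have hKL : KLdiv ν κ ≤ ENNReal.ofReal (ff ν y t) := by
    rw [KLdiv, if_pos ⟨hac, hint⟩]
    exact ENNReal.ofReal_le_ofReal (integral_mono_ae hint hLi hle)
  exact (iInf₂_le (f := fun κ (_ : κ ∈ {κ ∈ Bset | x ≤ mmean κ}) => KLdiv ν κ) κ
    ⟨⟨hκP, hκB⟩, hmean⟩).trans hKL

lemma KLdiv_self (ν : Measure ℝ) [IsProbabilityMeasure ν] : KLdiv ν ν = 0 := by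
  rw [KLdiv_eq, InformationTheory.klDiv_self]

lemma strong_duality {ν : Measure ℝ} [IsProbabilityMeasure ν] (hν : ν (Set.Icc (0:ℝ) 1)ᶜ = 0)
    {x y : ℝ} (hxy : x < y) (hy : y < 1) : KLinfU ν x ≤ FF ν y := by
  have hx : x < 1 := hxy.trans hy
  have hy' := sub_pos.2 hy
  set t1 := (1 - y) / (1 - x) with ht1
  have ht1p : 0 < t1 := div_pos (sub_pos.2 hy) (sub_pos.2 hx)
  have ht11 : t1 < 1 := (div_lt_one (sub_pos.2 hx)).2 (by linarith)
  have hcinv : ∀ t, 0 ≤ t → t < 1 → Continuous fun u : I => (gg y t u)⁻¹ := fun t a b =>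
    cont_gg.inv₀ fun u => (gg_pos hy a b u.2.2).ne'
  let D : ℝ → ℝ := fun t => ∫ X, (y - (clI X : ℝ)) * (gg y t (clI X))⁻¹ ∂ν
  have hIm : ∀ t, 0 ≤ t → t < 1 → ∫ X, (gg y t (clI X))⁻¹ ∂ν = 1 - t / (1 - y) * D t := by
    intro t a b
    have : ∀ X, (gg y t (clI X))⁻¹
        = 1 - t / (1 - y) * ((y - (clI X : ℝ)) * (gg y t (clI X))⁻¹) := by
      intro X
      have hg := gg_num_pos hy a b (clI X).2.2
      unfold gg
      field_simp
      ring
    rw [integral_congr_ae (ae_of_all _ this), integral_sub (by fun_prop), integral_const_mul]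
    · simp [D]
    · exact (integ_clI ν (φ := fun u => (y - (u : ℝ)) * (gg y t u)⁻¹)
        (by have := hcinv t a b; fun_prop)).const_mul _
  have hI2 : ∀ t, 0 ≤ t → t < 1 → ∫ X, (1 - (clI X : ℝ)) * (gg y t (clI X))⁻¹ ∂ν
      = (1 - y) * (∫ X, (gg y t (clI X))⁻¹ ∂ν) + D t := by
    intro t a b
    have hc := hcinv t a b
    rw [← integral_const_mul, ← integral_add]
    · congr 1; ext X; ring
    · exact (integ_clI ν hc).const_mul _
    · exact integ_clI ν (φ := fun u => (y - (u : ℝ)) * (gg y t u)⁻¹) (by fun_prop)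
  have fin : ∀ t, 0 ≤ t → t < 1 → 0 ≤ D t →
      ∫ X, (1 - (clI X : ℝ)) * (gg y t (clI X))⁻¹ ∂ν ≤ 1 - x → KLinfU ν x ≤ FF ν y := by
    intro t a b c e
    refine (strong_aux hν hy a b ?_ e).trans
      (le_iSup₂ (f := fun t (_ : t ∈ Set.Ico (0:ℝ) 1) => ENNReal.ofReal (ff ν y t)) t ⟨a, b⟩)
    rw [hIm t a b]
    have : 0 ≤ t / (1 - y) * D t := by positivity
    linarith
  by_cases hD1 : 0 ≤ D t1
  · refine fin t1 ht1p.le ht11 hD1 ?_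
    have hc := hcinv t1 ht1p.le ht11
    calc _ ≤ ∫ X, (1 - x) ∂ν := by
          refine integral_mono (integ_clI ν (φ := fun u => (1 - (u : ℝ)) * (gg y t1 u)⁻¹)
            (by fun_prop)) (by fun_prop) fun X => ?_
          have hg := gg_pos hy ht1p.le ht11 (clI X).2.2
          have hx' := sub_pos.2 hx
          simp only
          rw [← div_eq_mul_inv, div_le_iff₀ hg]
          have : t1 * (1 - clI X) / (1 - y) ≤ gg y t1 (clI X) := by
            unfold gg
            refine div_le_div_of_nonneg_right ?_ hy'.le
            have := mul_pos (sub_pos.2 ht11) hy'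
            linarith
          calc 1 - (clI X : ℝ) = (1 - x) * (t1 * (1 - clI X) / (1 - y)) := by
                rw [ht1]; field_simp
            _ ≤ _ := by gcongr
      _ = 1 - x := by simp
  by_cases hD0 : D 0 ≤ 0
  · have hm : x ≤ mmean ν := by
      have e0 := hI2 0 le_rfl zero_lt_one
      have g0 : ∀ u, gg y 0 u = 1 := fun u => by simp [gg, hy'.ne']
      simp only [D, g0, inv_one, mul_one] at hD0
      rw [integral_sub (by fun_prop) (integ_clI ν (φ := fun u => (u : ℝ)) (by fun_prop)),
        ← mean_clI hν] at hD0
      simp at hD0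
      linarith
    refine (iInf₂_le (f := fun κ (_ : κ ∈ {κ ∈ Bset | x ≤ mmean κ}) => KLdiv ν κ) ν
      ⟨⟨inferInstance, hν⟩, hm⟩).trans ?_
    simp only [KLdiv_self]
    exact zero_le
  · have hDc : ContinuousOn D (Set.Icc 0 t1) := by
      rw [continuousOn_iff_continuous_domRestrict]
      have h : Continuous fun w : Set.Icc 0 t1 × I => (y - (w.2 : ℝ)) * (gg y w.1 w.2)⁻¹ := by
        refine Continuous.mul (by fun_prop) (Continuous.inv₀ (by unfold gg; fun_prop) fun w => ?_)
        exact (gg_pos hy w.1.2.1 (w.1.2.2.trans_lt ht11) w.2.2.2).ne'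
      let ν' : ProbabilityMeasure ℝ := ⟨ν, inferInstance⟩
      exact (contJ h).comp (f := fun q : Set.Icc 0 t1 => (ν', q)) (by fun_prop)
    push Not at hD1 hD0
    obtain ⟨t, ht, hDt⟩ := intermediate_value_Icc' ht1p.le hDc ⟨hD1.le, hD0.le⟩
    have htl := ht.2.trans_lt ht11
    refine fin t ht.1 htl hDt.ge ?_
    rw [hI2 t ht.1 htl, hIm t ht.1 htl, hDt]
    simp; linarith

lemma KLinfU_eq {ν : ProbabilityMeasure ℝ} (hν : ν ∈ BsetW) {x : ℝ} (hx : x < 1) :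
    KLinfU (ν : Measure ℝ) x = FF ν x := by
  refine le_antisymm ?_ ?_
  · have hc : ContinuousOn (fun y => FF (ν : Measure ℝ) y) (Set.Iio 1) := by
      rw [continuousOn_iff_continuous_domRestrict]
      exact cont_FF.comp (f := fun y : Set.Iio (1:ℝ) => (ν, y)) (by fun_prop)
    have h := (hc.continuousAt (Iio_mem_nhds hx)).tendsto.mono_left
      (nhdsWithin_le_nhds (s := Set.Ioi x))
    refine ge_of_tendsto h ?_
    filter_upwards [Ioo_mem_nhdsGT hx] with y hy
    exact strong_duality hν hy.1 hy.2
  · refine le_iInf₂ fun κ hκ => iSup₂_le fun t ht => ?_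
    have := hκ.1.1
    exact weak_duality hκ.1.2 hx hκ.2 ht.1 ht.2

lemma contU : ContinuousOn (fun p : ProbabilityMeasure ℝ × ℝ => KLinfU (p.1 : Measure ℝ) p.2)
      (BsetW ×ˢ Set.Iio (1:ℝ)) := by
  have h : ContinuousOn (fun p : ProbabilityMeasure ℝ × ℝ => FF (p.1 : Measure ℝ) p.2)
      (BsetW ×ˢ Set.Iio (1:ℝ)) := by
    rw [continuousOn_iff_continuous_domRestrict]
    exact cont_FF.comp (f := fun p : (BsetW ×ˢ Set.Iio (1:ℝ) : Set (ProbabilityMeasure ℝ × ℝ)) =>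
      (p.1.1, (⟨p.1.2, p.2.2⟩ : Set.Iio (1:ℝ)))) (by fun_prop)
  exact h.congr fun p hp => KLinfU_eq hp.1 hp.2

/-- Reflection of the real line. -/
def rfl1 (x : ℝ) : ℝ := 1 - x

lemma cont_rfl1 : Continuous rfl1 := by unfold rfl1; fun_prop

lemma map_map_rfl1 (κ : Measure ℝ) : (κ.map rfl1).map rfl1 = κ := by
  rw [Measure.map_map cont_rfl1.measurable cont_rfl1.measurable]
  have : rfl1 ∘ rfl1 = id := by ext; simp [rfl1]
  rw [this, Measure.map_id]

lemma map_Bset {κ : Measure ℝ} (h : κ ∈ Bset) : κ.map rfl1 ∈ Bset := by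
  have := h.1
  refine ⟨Measure.isProbabilityMeasure_map cont_rfl1.measurable.aemeasurable, ?_⟩
  rw [Measure.map_apply cont_rfl1.measurable measurableSet_Icc.compl]
  convert h.2 using 2
  ext z
  simp only [Set.mem_preimage, Set.mem_compl_iff, Set.mem_Icc, rfl1]
  constructor <;> intro h1 h2 <;> apply h1 <;> constructor <;> linarith [h2.1, h2.2]

lemma mean_map {κ : Measure ℝ} (h : κ ∈ Bset) : mmean (κ.map rfl1) = 1 - mmean κ := by
  have := h.1
  have hi : Integrable (fun x : ℝ => x) κ :=
    (integ_clI κ (φ := fun u => (u : ℝ)) (by fun_prop)).congr (clI_ae h.2)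
  unfold mmean
  rw [integral_map cont_rfl1.measurable.aemeasurable (by fun_prop)]
  unfold rfl1
  rw [integral_sub (by fun_prop) hi]
  simp

lemma KLdiv_map {ν κ : Measure ℝ} (hν : ν ∈ Bset) (h : κ ∈ Bset) :
    KLdiv (ν.map rfl1) (κ.map rfl1) ≤ KLdiv ν κ := by
  have := h.1
  have := hν.1
  have := (map_Bset h).1
  have := (map_Bset hν).1
  rw [KLdiv_eq, KLdiv_eq]
  exact InformationTheory.klDiv_map_le _ _ cont_rfl1.measurable

lemma KLinfL_eq_s17 {ν : Measure ℝ} (hν : ν ∈ Bset) (x : ℝ) :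
    KLinfL ν x = KLinfU (ν.map rfl1) (1 - x) := by
  refine le_antisymm ?_ ?_
  · refine le_iInf₂ fun κ hκ => ?_
    refine (iInf₂_le (f := fun κ (_ : κ ∈ {κ ∈ Bset | mmean κ ≤ x}) => KLdiv ν κ) (κ.map rfl1)
      ⟨map_Bset hκ.1, by rw [mean_map hκ.1]; linarith [hκ.2]⟩).trans ?_
    have := KLdiv_map (map_Bset hν) hκ.1
    rwa [map_map_rfl1] at this
  · refine le_iInf₂ fun κ hκ => ?_
    exact (iInf₂_le (f := fun κ (_ : κ ∈ {κ ∈ Bset | 1 - x ≤ mmean κ}) => KLdiv (ν.map rfl1) κ)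
      (κ.map rfl1)
      ⟨map_Bset hκ.1, by rw [mean_map hκ.1]; linarith [hκ.2]⟩).trans (KLdiv_map hν hκ.1)

/-- Continuity of `KL_inf` for bounded distributions: with `B` endowed with
the topology of weak convergence, `(ν,x) ↦ KL_inf^U(ν,B,x)` is jointly continuous on
`B × [0,1)` and `(ν,x) ↦ KL_inf^L(ν,B,x)` is jointly continuous on `B × (0,1]`. -/
theorem stmt_17 :
    ContinuousOn (fun p : ProbabilityMeasure ℝ × ℝ => KLinfU (p.1 : Measure ℝ) p.2)
      (BsetW ×ˢ Set.Ico (0:ℝ) 1) ∧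
    ContinuousOn (fun p : ProbabilityMeasure ℝ × ℝ => KLinfL (p.1 : Measure ℝ) p.2)
      (BsetW ×ˢ Set.Ioc (0:ℝ) 1) := by
  refine ⟨contU.mono (Set.prod_mono_right fun x hx => hx.2), ?_⟩
  have h : ContinuousOn (fun p : ProbabilityMeasure ℝ × ℝ =>
      KLinfU (p.1.map cont_rfl1.measurable.aemeasurable : Measure ℝ) (1 - p.2))
      (BsetW ×ˢ Set.Ioc (0:ℝ) 1) := by
    refine contU.comp (f := fun p : ProbabilityMeasure ℝ × ℝ =>
      (p.1.map cont_rfl1.measurable.aemeasurable, 1 - p.2)) ?_ ?_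
    · exact (((ProbabilityMeasure.continuous_map cont_rfl1).comp continuous_fst).prodMk
        (by fun_prop)).continuousOn
    · intro p hp
      refine ⟨(map_Bset (κ := p.1) ⟨inferInstance, hp.1⟩).2, ?_⟩
      have := hp.2.1
      simp only [Set.mem_Iio]; linarith
  exact h.congr fun p hp => KLinfL_eq_s17 ⟨inferInstance, hp.1⟩ p.2
end
end
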